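/- arXiv:2209.12312 — 2 statements merged into one kernel-verified Lean document; each statement's English description precedes it below -/
import Mathlib

section
/- Let σ ⊂ ℝ² be a smooth simple closed curve, Ω₋ the bounded simply connected domain it encloses, Ω₊ := ℝ² ∖ (σ ∪ closure(Ω₋)), 𝒮 := σ × ℝ ⊂ ℝ³, and 𝒮± := Ω± × ℝ. Suppose v₋ : Ω₋ → ℝ² and v₊ : Ω₊ → ℝ² are bounded vector fields, C¹ up to σ, and q : ℝ³ → ℝ is a harmonic homogeneous quadratic polynomial, such that: (b) the fields u± := (v±, 0) + ∇q on 𝒮± are divergence-free, curl-free, and tangent to 𝒮; (c) for every point p ∈ 𝒮, the vector u₊(p) − u₋(p) lies in the kernel of the matrix Du₊(p) + Du₋(p). Then v₊ ≡ 0, v₋ ≡ 0, and q ≡ 0. -/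
noncomputable section

open MeasureTheory Filter Set
open scoped RealInnerProductSpace Topology

abbrev E3 : Type := EuclideanSpace ℝ (Fin 3)
abbrev E2 : Type := EuclideanSpace ℝ (Fin 2)

def mk3 (a b c : ℝ) : E3 := (EuclideanSpace.equiv (Fin 3) ℝ).symm ![a, b, c]

def e3 (i : Fin 3) : E3 := EuclideanSpace.single i 1

/-- `∂_j v_i` at `p`. -/
def pder (v : E3 → E3) (i j : Fin 3) (p : E3) : ℝ := fderiv ℝ v p (e3 j) i

def div3 (v : E3 → E3) (p : E3) : ℝ := ∑ i, pder v i i p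

def curl3 (v : E3 → E3) (p : E3) : E3 :=
  mk3 (pder v 2 1 p - pder v 1 2 p) (pder v 0 2 p - pder v 2 0 p)
    (pder v 1 0 p - pder v 0 1 p)

def lap3 (f : E3 → ℝ) (p : E3) : ℝ :=
  ∑ j, fderiv ℝ (fun x => fderiv ℝ f x (e3 j)) p (e3 j)

def IsTangentAt (S : Set E3) (p v : E3) : Prop :=
  ∃ γ : ℝ → E3, (∀ t, γ t ∈ S) ∧ γ 0 = p ∧ HasDerivAt γ v 0

def IsSurface (k : ℕ∞) (S : Set E3) : Prop :=
  ∀ p ∈ S, ∃ (f : E2 → E3) (U : Set E2) (V : Set E3),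
    IsOpen U ∧ IsOpen V ∧ p ∈ V ∧ ContDiffOn ℝ k f U ∧ Set.InjOn f U ∧
    f '' U = S ∩ V ∧ ∀ x ∈ U, Function.Injective (fderiv ℝ f x)

structure CVSBase (S Ωm Ωp : Set E3) (vm vp : E3 → E3) : Prop where
  openm : IsOpen Ωm
  openp : IsOpen Ωp
  disj : Disjoint Ωm Ωp
  disjm : Disjoint Ωm S
  disjp : Disjoint Ωp S
  clm : S ⊆ closure Ωm
  clp : S ⊆ closure Ωp
  smoothm : ∃ W, IsOpen W ∧ Ωm ∪ S ⊆ W ∧ ContDiffOn ℝ 1 vm W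
  smoothp : ∃ W, IsOpen W ∧ Ωp ∪ S ⊆ W ∧ ContDiffOn ℝ 1 vp W
  divm : ∀ p ∈ Ωm, div3 vm p = 0
  divp : ∀ p ∈ Ωp, div3 vp p = 0
  curlm : ∀ p ∈ Ωm, curl3 vm p = 0
  curlp : ∀ p ∈ Ωp, curl3 vp p = 0
  tangentm : ∀ p ∈ S, IsTangentAt S p (vm p)
  tangentp : ∀ p ∈ S, IsTangentAt S p (vp p)

structure CVSPair (S Ωm Ωp : Set E3) (vm vp : E3 → E3)
    extends CVSBase S Ωm Ωp vm vp : Prop where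
  strain : ∀ p ∈ S, (fderiv ℝ vp p + fderiv ℝ vm p) (vp p - vm p) = 0
  bernoulli : ∀ p ∈ S, ∀ᶠ q in 𝓝[S] p,
    ‖vp q‖ ^ 2 - ‖vm q‖ ^ 2 = ‖vp p‖ ^ 2 - ‖vm p‖ ^ 2

/-- the open region `Ωm` is the bounded region enclosed by the closed surface `S`,
and `Ωp` is its exterior. -/
structure EnclosedBy (S Ωm Ωp : Set E3) : Prop where
  openm : IsOpen Ωm
  bounded : Bornology.IsBounded Ωm
  fr : frontier Ωm = S
  plus : Ωp = (Ωm ∪ S)ᶜ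

/-- gradient of a scalar function on ℝ³. -/
def grad3 (f : E3 → ℝ) (p : E3) : E3 :=
  (EuclideanSpace.equiv (Fin 3) ℝ).symm (fun i => fderiv ℝ f p (e3 i))

/-! Write `V₋`, `V₊` for the horizontal parts of `u₋`, `u₊`, viewed as planar fields, and `A` for
the linear map `∇q`. The planar fields are curl-free with constant divergence `τ = -A₃₃`.

Since `V₋` is tangent to the curve, the divergence theorem gives `τ = 0`; applied to
`arctan φ • V₋`, where `φ` is a potential of `V₋`, whose divergence is `|V₋|² / (1 + φ²)`, it then
gives `V₋ = 0`. No regularity of the curve is needed for this: cutoffs of the distance to the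
complement suffice.

Hence along the curve `V₊` is in the kernel of `DV₊`. Being tangent, it is constant in the direction
of the curve, so it is a constant vector tangent to a closed curve everywhere, that is, zero. As
`DV₊` is symmetric and trace-free, it vanishes on the curve too, so the extension by zero of the
complex conjugate of `V₊` is an entire function, and `V₊ = 0`.

Comparing heights on the cylinder kills the horizontal part of the image under `A` of the vertical
vector, and its vertical part is `-τ = 0`. Outside the curve the bounded field `v₊` is minus the
horizontal part of `A`, so this part vanishes as well.
-/

section Potential

/-- A family of local primitives on `X`: `Φ x` is a function on the neighborhood `U x` of `x`, and
on overlaps any two members of the family differ by a locally constant function. -/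
structure IsPrimitiveFamily {X G : Type*} [TopologicalSpace X] [AddCommGroup G]
    (Φ : X → X → G) (U : X → Set X) : Prop where
  isOpen (x : X) : IsOpen (U x)
  mem (x : X) : x ∈ U x
  eventually_sub_eq (x : X) : ∀ y ∈ U x, ∀ᶠ z in 𝓝 y, Φ y z - Φ y y = Φ x z - Φ x y

/-- The space of germs of the functions `Φ x + c`: the germ at `base` whose value there is
`value`. -/
structure PrimitiveGerm {X G : Type*} (Φ : X → X → G) where
  base : X
  value : G

namespace PrimitiveGerm

variable {X G : Type*} [AddCommGroup G] {Φ : X → X → G}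

/-- The germ at `y` of the function `Φ a.base + c` represented by `a`. -/
def continuation (a : PrimitiveGerm Φ) (y : X) : PrimitiveGerm Φ :=
  ⟨y, a.value + (Φ a.base y - Φ a.base a.base)⟩

theorem continuation_base (a : PrimitiveGerm Φ) : a.continuation a.base = a := by
  simp only [continuation, sub_self, add_zero]

/-- A neighborhood of a germ contains its continuations to all points near its base point. -/
instance [TopologicalSpace X] : TopologicalSpace (PrimitiveGerm Φ) :=
  TopologicalSpace.mkOfNhds fun a => map a.continuation (𝓝 a.base)

end PrimitiveGerm

namespace IsPrimitiveFamily

variable {X G : Type*} [TopologicalSpace X] [AddCommGroup G] {Φ : X → X → G} {U : X → Set X}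

theorem eventually_continuation_continuation (h : IsPrimitiveFamily Φ U) (a : PrimitiveGerm Φ)
    {y : X} (hy : y ∈ U a.base) :
    ∀ᶠ z in 𝓝 y, (a.continuation y).continuation z = a.continuation z := by
  filter_upwards [h.eventually_sub_eq a.base y hy] with z hz
  simp only [PrimitiveGerm.continuation, hz, add_assoc, sub_add_sub_cancel']

theorem nhds_germ (h : IsPrimitiveFamily Φ U) (a : PrimitiveGerm Φ) :
    𝓝 a = map a.continuation (𝓝 a.base) := by
  refine TopologicalSpace.nhds_mkOfNhds
    (fun a : PrimitiveGerm Φ => map a.continuation (𝓝 a.base)) a ?_ ?_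
  · intro b s hs
    simpa only [mem_preimage, b.continuation_base] using! mem_of_mem_nhds (mem_map.1 hs)
  · intro b A (hA : ∀ᶠ y in 𝓝 b.base, b.continuation y ∈ A)
    rw [eventually_map]
    filter_upwards [hA.eventually_nhds, (h.isOpen b.base).mem_nhds (h.mem b.base)] with y hy hyU
    have hcont := h.eventually_continuation_continuation b hyU
    refine mem_map.2 ?_
    filter_upwards [hy, hcont] with z hz hzy
    rwa [mem_preimage, hzy]

theorem continuous_base (h : IsPrimitiveFamily Φ U) :
    Continuous (PrimitiveGerm.base : PrimitiveGerm Φ → X) := by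
  refine continuous_iff_continuousAt.2 fun a => ?_
  rw [ContinuousAt, h.nhds_germ, tendsto_map'_iff]
  exact tendsto_id

theorem isCoveringMap_base (h : IsPrimitiveFamily Φ U) :
    IsCoveringMap (PrimitiveGerm.base : PrimitiveGerm Φ → X) := by
  intro x
  let _ : TopologicalSpace G := ⊥
  have : DiscreteTopology G := ⟨rfl⟩
  let toProd : (PrimitiveGerm.base : PrimitiveGerm Φ → X) ⁻¹' U x → U x × G :=
    fun e => (⟨e.1.base, e.2⟩, e.1.value - Φ x e.1.base)
  let ofProd : U x × G → (PrimitiveGerm.base : PrimitiveGerm Φ → X) ⁻¹' U x :=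
    fun u => ⟨⟨u.1, u.2 + Φ x u.1⟩, u.1.2⟩
  have continuous_toProd : Continuous toProd := by
    refine Continuous.prodMk ((h.continuous_base.comp continuous_subtype_val).subtype_mk _) ?_
    refine continuous_iff_continuousAt.2 fun ⟨a, ha⟩ => ?_
    rw [ContinuousAt, nhds_discrete G, tendsto_pure, nhds_subtype_eq_comap, eventually_comap,
      h.nhds_germ, eventually_map]
    filter_upwards [h.eventually_sub_eq x a.base ha] with z hz
    rintro ⟨b, hb⟩ rfl
    simp only [PrimitiveGerm.continuation, hz]
    abel
  have continuous_ofProd : Continuous ofProd := by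
    refine Continuous.subtype_mk (continuous_iff_continuousAt.2 fun ⟨⟨y, hy⟩, s⟩ => ?_) _
    rw [ContinuousAt, nhds_prod_eq, nhds_discrete G, h.nhds_germ, prod_pure, tendsto_map'_iff]
    have hval : Tendsto (Subtype.val : U x → X) (𝓝 ⟨y, hy⟩) (𝓝 y) :=
      continuous_subtype_val.continuousAt
    refine (tendsto_map.comp hval).congr' ?_
    filter_upwards [hval.eventually (h.eventually_sub_eq x y hy)] with z hz
    simp only [Function.comp_apply, PrimitiveGerm.continuation, hz, add_assoc,
      add_sub_cancel]
  exact IsEvenlyCovered.to_isEvenlyCovered_preimage (I := G)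
    ⟨‹_›, U x, h.mem x, h.isOpen x, (h.isOpen x).preimage h.continuous_base,
      ⟨⟨toProd, ofProd, fun _ => by simp [toProd, ofProd], fun _ => by simp [toProd, ofProd]⟩,
        continuous_toProd, continuous_ofProd⟩, fun _ => rfl⟩

/-- The primitive is a global section of the covering by germs. -/
theorem exists_primitive [SimplyConnectedSpace X] [LocallyPathConnectedSpace X]
    (h : IsPrimitiveFamily Φ U) :
    ∃ φ : X → G, ∀ x, ∀ᶠ z in 𝓝 x, φ z - φ x = Φ x z - Φ x x := by
  obtain ⟨x₀⟩ : Nonempty X := inferInstance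
  obtain ⟨F, ⟨-, hF⟩, -⟩ := h.isCoveringMap_base.existsUnique_continuousMap_lifts
    (ContinuousMap.id X) x₀ ⟨x₀, 0⟩ rfl
  have base_F (x : X) : (F x).base = x := congrFun hF x
  refine ⟨fun x => (F x).value, fun x => ?_⟩
  have hFx : Tendsto F (𝓝 x) (map (F x).continuation (𝓝 x)) := by
    simpa only [h.nhds_germ, base_F] using F.continuous.tendsto x
  have mem_sheet : {e | e = (F x).continuation e.base} ∈ map (F x).continuation (𝓝 x) :=
    mem_map.2 (univ_mem' fun _ => rfl)
  filter_upwards [hFx mem_sheet] with z (hz : F z = (F x).continuation (F z).base)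
  rw [hz, base_F, PrimitiveGerm.continuation, base_F, add_sub_cancel_left]

end IsPrimitiveFamily

variable {E F : Type*} [NormedAddCommGroup E] [NormedSpace ℝ E]
  [NormedAddCommGroup F] [NormedSpace ℝ F] {ω : E → E →L[ℝ] F} {Ω : Set E}

theorem sub_eq_sub_of_hasFDerivAt {B : Set E} {f g : E → F} (hB : IsOpen B)
    (hBc : IsPreconnected B) (hf : ∀ z ∈ B, HasFDerivAt f (ω z) z)
    (hg : ∀ z ∈ B, HasFDerivAt g (ω z) z) {y z : E} (hy : y ∈ B) (hz : z ∈ B) :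
    f z - f y = g z - g y := by
  have hfg : ∀ w ∈ B, HasFDerivAt (f - g) (0 : E →L[ℝ] F) w := fun w hw => by
    simpa only [sub_self] using (hf w hw).sub (hg w hw)
  have hconst : (f - g) z = (f - g) y := hB.is_const_of_fderiv_eq_zero (𝕜 := ℝ) hBc
    (fun w hw => (hfg w hw).differentiableAt.differentiableWithinAt)
    (fun w hw => (hfg w hw).fderiv) hz hy
  rwa [Pi.sub_apply, Pi.sub_apply, sub_eq_sub_iff_sub_eq_sub] at hconst

theorem exists_forall_hasFDerivAt_of_local [SimplyConnectedSpace Ω] (hΩ : IsOpen Ω)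
    (hloc : ∀ x ∈ Ω, ∃ r > 0, ∃ f : E → F,
      ∀ z ∈ Metric.ball x r, HasFDerivAt f (ω z) z) :
    ∃ φ : E → F, ∀ z ∈ Ω, HasFDerivAt φ (ω z) z := by
  classical
  have := hΩ.locallyPathConnectedSpace
  choose r hr f hf using fun x : Ω => hloc x x.2
  have hprim : IsPrimitiveFamily (fun x y : Ω => f x y)
      (fun x => Subtype.val ⁻¹' Metric.ball (x : E) (r x)) := by
    refine ⟨fun x => Metric.isOpen_ball.preimage continuous_subtype_val,
      fun x => Metric.mem_ball_self (hr x), fun x y hy => ?_⟩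
    have hopen : IsOpen (Metric.ball (x : E) (r x) ∩ Metric.ball (y : E) (r y)) :=
      Metric.isOpen_ball.inter Metric.isOpen_ball
    have hyB : (y : E) ∈ Metric.ball (x : E) (r x) ∩ Metric.ball (y : E) (r y) :=
      ⟨hy, Metric.mem_ball_self (hr y)⟩
    filter_upwards [continuous_subtype_val.continuousAt.preimage_mem_nhds
      (hopen.mem_nhds hyB)] with z hz
    exact sub_eq_sub_of_hasFDerivAt hopen
      ((convex_ball _ _).inter (convex_ball _ _)).isPreconnected
      (fun w hw => hf y w hw.2) (fun w hw => hf x w hw.1) hyB hz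
  obtain ⟨φ, hφ⟩ := hprim.exists_primitive
  refine ⟨fun z => if h : z ∈ Ω then φ ⟨z, h⟩ else 0, fun z hz => ?_⟩
  refine ((hf ⟨z, hz⟩ z (Metric.mem_ball_self (hr _))).add_const
    (φ ⟨z, hz⟩ - f ⟨z, hz⟩ z)).congr_of_eventuallyEq ?_
  have hφz := hφ ⟨z, hz⟩
  rw [nhds_subtype_eq_comap, eventually_comap] at hφz
  filter_upwards [hφz, hΩ.mem_nhds hz] with w hw hwΩ
  rw [dif_pos hwΩ, ← sub_add_cancel (φ ⟨w, hwΩ⟩) (φ ⟨z, hz⟩), hw ⟨w, hwΩ⟩ rfl]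
  abel

theorem exists_forall_hasFDerivAt_of_simplyConnected [CompleteSpace F] [SimplyConnectedSpace Ω]
    (hΩ : IsOpen Ω) (hω : DifferentiableOn ℝ ω Ω)
    (hsymm : ∀ z ∈ Ω, ∀ x y, fderiv ℝ ω z x y = fderiv ℝ ω z y x) :
    ∃ φ : E → F, ∀ z ∈ Ω, HasFDerivAt φ (ω z) z := by
  refine exists_forall_hasFDerivAt_of_local hΩ fun x hx => ?_
  obtain ⟨r, hr, hball⟩ := Metric.isOpen_iff.1 hΩ x hx
  obtain ⟨f, hf⟩ := (convex_ball x r).exists_forall_hasFDerivAt_of_fderiv_symmetric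
    Metric.isOpen_ball (hω.mono hball) fun z hz => hsymm z (hball hz)
  exact ⟨r, hr, f, hf⟩

end Potential

section Divergence

/-- The divergence of the vector field `X` at `x`, as the trace of the derivative. -/
def divergence {E : Type*} [NormedAddCommGroup E] [NormedSpace ℝ E] (X : E → E) (x : E) : ℝ :=
  LinearMap.trace ℝ E (fderiv ℝ X x : E →ₗ[ℝ] E)

section IntegrationByParts

variable {E : Type*} [NormedAddCommGroup E] [NormedSpace ℝ E] {X : E → E}

theorem divergence_congr {Y : E → E} {x : E} (h : X =ᶠ[𝓝 x] Y) :
    divergence X x = divergence Y x := by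
  rw [divergence, h.fderiv_eq, divergence]

section Integrable

variable [MeasurableSpace E] [BorelSpace E] {μ : Measure E} [IsFiniteMeasureOnCompacts μ]
  {χ : E → ℝ}

theorem integrable_lineDeriv_mul {K : NNReal} (hχ : LipschitzWith K χ) {f : E → ℝ}
    (hf : ContDiff ℝ 1 f) (hfc : HasCompactSupport f) (v : E) :
    Integrable (fun x => lineDeriv ℝ χ x v * f x) μ :=
  (hf.continuous.integrable_of_hasCompactSupport hfc).bdd_mul
    (measurable_lineDeriv hχ.continuous).aestronglyMeasurable
    (ae_of_all _ fun _ => norm_lineDeriv_le_of_lipschitz ℝ hχ)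

theorem integrable_mul_fderiv (hχ : Continuous χ) {f : E → ℝ} (hf : ContDiff ℝ 1 f)
    (hfc : HasCompactSupport f) (v : E) : Integrable (fun x => χ x * fderiv ℝ f x v) μ :=
  (hχ.mul ((hf.continuous_fderiv one_ne_zero).clm_apply
    continuous_const)).integrable_of_hasCompactSupport (hfc.fderiv_apply (𝕜 := ℝ) v).mul_left

end Integrable

variable [FiniteDimensional ℝ E]

theorem continuousOn_divergence {Ω : Set E} (hX : ContDiffOn ℝ 1 X Ω)
    (hΩ : IsOpen Ω) : ContinuousOn (divergence X) Ω :=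
  (LinearMap.continuous_of_finiteDimensional
    (LinearMap.trace ℝ E ∘ₗ ContinuousLinearMap.coeLM ℝ)).comp_continuousOn
    (hX.continuousOn_fderiv_of_isOpen hΩ le_rfl)

variable [MeasurableSpace E] [BorelSpace E] {μ : Measure E} [μ.IsAddHaarMeasure]
  {χ : E → ℝ} {K : NNReal}

theorem integral_lineDeriv_mul_eq_neg (hχ : LipschitzWith K χ) {f : E → ℝ} (hf : ContDiff ℝ 1 f)
    (hfc : HasCompactSupport f) (v : E) :
    ∫ x, lineDeriv ℝ χ x v * f x ∂μ = -∫ x, χ x * fderiv ℝ f x v ∂μ := by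
  obtain ⟨D, hD⟩ := hf.lipschitzWith_of_hasCompactSupport hfc one_ne_zero
  rw [hχ.integral_lineDeriv_mul_eq hD hfc, ← integral_neg]
  refine integral_congr_ae (ae_of_all _ fun x => ?_)
  simp only [(hf.differentiable one_ne_zero x).lineDeriv_eq_fderiv, map_neg]
  ring

theorem integral_fderiv_apply_eq_neg_of_hasCompactSupport (hχ : LipschitzWith K χ)
    (hX : ContDiff ℝ 1 X) (hXc : HasCompactSupport X) :
    ∫ x, fderiv ℝ χ x (X x) ∂μ = -∫ x, χ x * divergence X x ∂μ := by
  let b := Module.finBasis ℝ E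
  let coord i : E →L[ℝ] ℝ := (b.coord i).toContinuousLinearMap
  have contDiff_coord i : ContDiff ℝ 1 fun x => coord i (X x) := (coord i).contDiff.comp hX
  have hasCompactSupport_coord i : HasCompactSupport fun x => coord i (X x) :=
    hXc.comp_left (map_zero (coord i))
  have fderiv_coord i x : fderiv ℝ (fun y => coord i (X y)) x (b i) =
      coord i (fderiv ℝ X x (b i)) :=
    congrArg (· (b i)) ((coord i).hasFDerivAt.comp x
      (hX.differentiable one_ne_zero x).hasFDerivAt).fderiv
  calc ∫ x, fderiv ℝ χ x (X x) ∂μ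
      = ∫ x, ∑ i, lineDeriv ℝ χ x (b i) * coord i (X x) ∂μ := by
        refine integral_congr_ae ?_
        filter_upwards [hχ.ae_differentiableAt] with x hx
        conv_lhs => rw [← b.sum_repr (X x), map_sum]
        exact Finset.sum_congr rfl fun i _ => by
          rw [map_smul, hx.lineDeriv_eq_fderiv, smul_eq_mul, mul_comm]; rfl
    _ = -∫ x, ∑ i, χ x * fderiv ℝ (fun y => coord i (X y)) x (b i) ∂μ := by
        rw [integral_finsetSum _ fun i _ => integrable_lineDeriv_mul hχ (contDiff_coord i)
            (hasCompactSupport_coord i) (b i),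
          integral_finsetSum _ fun i _ => integrable_mul_fderiv hχ.continuous (contDiff_coord i)
            (hasCompactSupport_coord i) (b i), ← Finset.sum_neg_distrib]
        exact Finset.sum_congr rfl fun i _ => integral_lineDeriv_mul_eq_neg hχ (contDiff_coord i)
          (hasCompactSupport_coord i) (b i)
    _ = -∫ x, χ x * divergence X x ∂μ := by
        simp only [divergence, LinearMap.trace_eq_matrix_trace ℝ b, Matrix.trace, Matrix.diag_apply,
          LinearMap.toMatrix_apply, Finset.mul_sum, fderiv_coord]
        rfl

/-- `X` may be replaced by the globally smooth field `η • X`, where `η = 1` near the support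
of `χ`. -/
theorem integral_fderiv_apply_eq_neg (hχ : LipschitzWith K χ) (hχc : HasCompactSupport χ)
    {Ω : Set E} (hΩ : IsOpen Ω) (hχΩ : tsupport χ ⊆ Ω) (hX : ContDiffOn ℝ 1 X Ω) :
    ∫ x, fderiv ℝ χ x (X x) ∂μ = -∫ x, χ x * divergence X x ∂μ := by
  obtain ⟨L, hL, hχL, hLΩ⟩ := exists_compact_between hχc.isCompact hΩ hχΩ
  obtain ⟨η, hη_one, hη_zero, -⟩ := exists_contMDiffMap_one_nhds_of_subset_interior
    (n := 1) (modelWithCornersSelf ℝ E) (isClosed_tsupport χ) hχL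
  have hY : ContDiff ℝ 1 fun x => η x • X x := by
    refine contDiff_iff_contDiffAt.2 fun x => ?_
    by_cases hx : x ∈ Ω
    · exact (η.contMDiff.contDiff.contDiffAt).smul (hX.contDiffAt (hΩ.mem_nhds hx))
    · refine (contDiffAt_const (c := (0 : E))).congr_of_eventuallyEq ?_
      filter_upwards [hL.isClosed.isOpen_compl.mem_nhds fun hxL => hx (hLΩ hxL)] with y hy
      rw [hη_zero y hy, zero_smul]
  have hYc : HasCompactSupport fun x => η x • X x :=
    HasCompactSupport.intro hL fun x hx => by rw [hη_zero x hx, zero_smul]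
  have hYX : ∀ x ∈ tsupport χ, (fun x => η x • X x) =ᶠ[𝓝 x] X := fun x hx => by
    filter_upwards [hη_one.filter_mono (nhds_le_nhdsSet hx)] with y hy
    rw [hy, one_smul]
  calc ∫ x, fderiv ℝ χ x (X x) ∂μ
      = ∫ x, fderiv ℝ χ x (η x • X x) ∂μ := by
        refine integral_congr_ae (ae_of_all _ fun x => ?_)
        by_cases hx : x ∈ tsupport χ
        · exact congrArg _ (hYX x hx).eq_of_nhds.symm
        · simp only [fderiv_of_notMem_tsupport ℝ hx, _root_.zero_apply]
    _ = -∫ x, χ x * divergence (fun x => η x • X x) x ∂μ :=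
        integral_fderiv_apply_eq_neg_of_hasCompactSupport hχ hY hYc
    _ = -∫ x, χ x * divergence X x ∂μ := by
        congr 1
        refine integral_congr_ae (ae_of_all _ fun x => ?_)
        by_cases hx : x ∈ tsupport χ
        · exact congrArg _ (divergence_congr (hYX x hx))
        · simp only [image_eq_zero_of_notMem_tsupport hx, zero_mul]

end IntegrationByParts

section Cutoff

/-- The cutoff function that vanishes where `N * infDist x s ≤ 1`, equals `1` where
`2 ≤ N * infDist x s`, and is affine in the distance to `s` in between. -/
def infDistCutoff {E : Type*} [PseudoMetricSpace E] (s : Set E) (N : NNReal) (x : E) : ℝ :=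
  min 1 (max 0 (N * Metric.infDist x s - 1))

section Metric

variable {E : Type*} [PseudoMetricSpace E] {s : Set E} {N : NNReal} {x : E}

theorem infDistCutoff_mem_Icc : infDistCutoff s N x ∈ Icc 0 1 :=
  ⟨le_min zero_le_one (le_max_left _ _), min_le_left _ _⟩

theorem infDistCutoff_eq_zero (h : N * Metric.infDist x s ≤ 1) : infDistCutoff s N x = 0 := by
  rw [infDistCutoff, max_eq_left (sub_nonpos.2 h), min_eq_right zero_le_one]

theorem infDistCutoff_eq_one (h : 2 ≤ N * Metric.infDist x s) : infDistCutoff s N x = 1 := by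
  rw [infDistCutoff, max_eq_right (by linarith), min_eq_left (by linarith)]

theorem abs_infDistCutoff_sub_le (x y : E) :
    |infDistCutoff s N x - infDistCutoff s N y| ≤
      N * |Metric.infDist x s - Metric.infDist y s| := by
  have hLip : LipschitzWith N fun d : ℝ => min 1 (max 0 (N * d - 1)) := by
    refine LipschitzWith.const_min (LipschitzWith.const_max (LipschitzWith.of_dist_le_mul
      fun a b => le_of_eq ?_) 0) 1
    rw [dist_sub_right, Real.dist_eq, Real.dist_eq, ← mul_sub, abs_mul, NNReal.abs_eq]
  simpa only [Real.dist_eq, infDistCutoff] using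
    hLip.dist_le_mul (Metric.infDist x s) (Metric.infDist y s)

theorem lipschitzWith_infDistCutoff : LipschitzWith N (infDistCutoff s N) := by
  refine LipschitzWith.of_dist_le_mul fun x y => (abs_infDistCutoff_sub_le x y).trans ?_
  gcongr
  simpa only [NNReal.coe_one, one_mul, Real.dist_eq] using
    (Metric.lipschitz_infDist_pt s).dist_le_mul x y

theorem tsupport_infDistCutoff_subset :
    tsupport (infDistCutoff s N) ⊆ {x | 1 ≤ N * Metric.infDist x s} := by
  refine closure_minimal (fun x hx => ?_)
    (isClosed_le continuous_const (continuous_const.mul (Metric.continuous_infDist_pt s)))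
  exact le_of_not_ge fun h => hx (infDistCutoff_eq_zero h)

theorem tsupport_infDistCutoff_subset_compl : tsupport (infDistCutoff s N) ⊆ sᶜ := by
  intro x hx hxs
  have h := tsupport_infDistCutoff_subset hx
  rw [mem_ofPred_eq, Metric.infDist_zero_of_mem hxs, mul_zero] at h
  exact zero_lt_one.not_ge h

theorem infDistCutoff_eventuallyEq_one (h : 2 < N * Metric.infDist x s) :
    infDistCutoff s N =ᶠ[𝓝 x] fun _ => 1 := by
  filter_upwards [(isOpen_lt continuous_const
    (continuous_const.mul (Metric.continuous_infDist_pt s))).mem_nhds h] with y hy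
  exact infDistCutoff_eq_one hy.le

theorem eventually_two_lt_mul_infDist (hx : 0 < Metric.infDist x s) :
    ∀ᶠ n : ℕ in atTop, 2 < ((n : NNReal) : ℝ) * Metric.infDist x s := by
  filter_upwards [tendsto_natCast_atTop_atTop.eventually_gt_atTop (2 / Metric.infDist x s)]
    with n hn
  rwa [NNReal.coe_natCast, ← div_lt_iff₀ hx]

theorem tendsto_integral_infDistCutoff_mul [MeasurableSpace E] [OpensMeasurableSpace E]
    {μ : Measure E} {Ω : Set E} (hΩ : IsOpen Ω) (hne : Ωᶜ.Nonempty) {f : E → ℝ}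
    (hf : IntegrableOn f Ω μ) :
    Tendsto (fun n : ℕ => ∫ x in Ω, infDistCutoff Ωᶜ n x * f x ∂μ) atTop
      (𝓝 (∫ x in Ω, f x ∂μ)) := by
  refine tendsto_integral_of_dominated_convergence (fun x => ‖f x‖)
    (fun n => lipschitzWith_infDistCutoff.continuous.aestronglyMeasurable.mul
      hf.aestronglyMeasurable) hf.norm (fun n => ae_of_all _ fun x => ?_) ?_
  · rw [norm_mul, Real.norm_of_nonneg infDistCutoff_mem_Icc.1]
    exact mul_le_of_le_one_left (norm_nonneg _) infDistCutoff_mem_Icc.2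
  · filter_upwards [ae_restrict_mem hΩ.measurableSet] with x hx
    refine tendsto_const_nhds.congr' ?_
    filter_upwards [eventually_two_lt_mul_infDist
      ((hΩ.isClosed_compl.notMem_iff_infDist_pos hne).1 (notMem_compl_iff.2 hx))] with n hn
    rw [infDistCutoff_eq_one hn.le, one_mul]

end Metric

theorem abs_fderiv_le_of_abs_sub_le {E : Type*} [NormedAddCommGroup E] [NormedSpace ℝ E]
    {f g : E → ℝ} {C : ℝ} {x : E} (h : ∀ y, |f y - f x| ≤ C * |g y - g x|)
    (hf : DifferentiableAt ℝ f x) (hg : DifferentiableAt ℝ g x) (v : E) :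
    |fderiv ℝ f x v| ≤ C * |fderiv ℝ g x v| := by
  refine le_of_tendsto_of_tendsto (hf.hasFDerivAt.hasLineDerivAt v).tendsto_slope_zero.abs
    ((hg.hasFDerivAt.hasLineDerivAt v).tendsto_slope_zero.abs.const_mul C)
    (Eventually.of_forall fun t => ?_)
  simp only [smul_eq_mul, abs_mul, mul_left_comm C]
  exact mul_le_mul_of_nonneg_left (h _) (abs_nonneg _)

variable {E : Type*} [NormedAddCommGroup E] [InnerProductSpace ℝ E] {s : Set E} {x : E}

/-- The function `‖z - y‖ ^ 2 - infDist z s ^ 2` has a minimum at `z = x`. -/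
theorem infDist_mul_fderiv_infDist {y : E} (hy : y ∈ s) (hxy : Metric.infDist x s = dist x y)
    (hd : DifferentiableAt ℝ (fun z => Metric.infDist z s) x) (v : E) :
    Metric.infDist x s * fderiv ℝ (fun z => Metric.infDist z s) x v = ⟪x - y, v⟫ := by
  have hmin : IsLocalMin (fun z => ‖z - y‖ ^ 2 - Metric.infDist z s ^ 2) x := by
    refine Eventually.of_forall fun z => ?_
    simp only [← dist_eq_norm, hxy, sub_self, sub_nonneg]
    exact pow_le_pow_left₀ Metric.infDist_nonneg (Metric.infDist_le_dist_of_mem hy) 2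
  have hcrit := congrArg (· v) (hmin.hasFDerivAt_eq_zero
    ((((hasFDerivAt_id x).sub_const y).norm_sq).sub (hd.hasFDerivAt.pow 2)))
  simp only [id_eq, _root_.sub_apply, _root_.smul_apply, ContinuousLinearMap.comp_apply,
    innerSL_apply_apply, _root_.zero_apply, ContinuousLinearMap.id_apply, smul_eq_mul,
    nsmul_eq_mul, Nat.cast_ofNat, Nat.add_one_sub_one, pow_one] at hcrit
  linarith

theorem abs_fderiv_infDist_le [ProperSpace E] (hs : IsClosed s) (hne : s.Nonempty) (hx : x ∉ s)
    (hd : DifferentiableAt ℝ (fun z => Metric.infDist z s) x) {v : E} {C : ℝ}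
    (hC : ∀ y ∈ s, Metric.infDist x s = dist x y → |⟪x - y, v⟫| ≤ C * Metric.infDist x s ^ 2) :
    |fderiv ℝ (fun z => Metric.infDist z s) x v| ≤ C * Metric.infDist x s := by
  obtain ⟨y, hy, hxy⟩ := hs.exists_infDist_eq_dist hne x
  have hpos : 0 < Metric.infDist x s := (hs.notMem_iff_infDist_pos hne).1 hx
  have h := hC y hy hxy
  rw [← infDist_mul_fderiv_infDist hy hxy hd, abs_mul, abs_of_pos hpos] at h
  refine le_of_mul_le_mul_left (h.trans_eq ?_) hpos
  ring

/-- The cutoff is `N`-Lipschitz in the distance, but nonconstant only where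
`infDist x s ≤ 2 / N`. -/
theorem abs_fderiv_infDistCutoff_le {N : NNReal}
    (hχ : DifferentiableAt ℝ (infDistCutoff s N) x)
    (hd : DifferentiableAt ℝ (fun z => Metric.infDist z s) x) {v : E} {C : ℝ} (hC : 0 ≤ C)
    (hv : |fderiv ℝ (fun z => Metric.infDist z s) x v| ≤ C * Metric.infDist x s) :
    |fderiv ℝ (infDistCutoff s N) x v| ≤ 2 * C := by
  rcases lt_or_ge 2 (N * Metric.infDist x s) with h | h
  · rw [(infDistCutoff_eventuallyEq_one h).fderiv_eq, fderiv_fun_const, Pi.zero_apply,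
      _root_.zero_apply, abs_zero]
    positivity
  · calc |fderiv ℝ (infDistCutoff s N) x v|
        ≤ N * |fderiv ℝ (fun z => Metric.infDist z s) x v| :=
          abs_fderiv_le_of_abs_sub_le (fun y => abs_infDistCutoff_sub_le y x) hχ hd v
      _ ≤ N * (C * Metric.infDist x s) := by gcongr
      _ = N * Metric.infDist x s * C := by ring
      _ ≤ 2 * C := by gcongr

end Cutoff

section DivergenceTheorem

variable {E : Type*} [NormedAddCommGroup E] [InnerProductSpace ℝ E] [FiniteDimensional ℝ E]
  [MeasurableSpace E] [BorelSpace E] {μ : Measure E} [μ.IsAddHaarMeasure] {Ω : Set E} {X : E → E}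

theorem tendsto_integral_fderiv_infDistCutoff (hΩ : IsOpen Ω) (hne : Ωᶜ.Nonempty)
    (hΩμ : μ Ω ≠ ⊤) (hX : ContinuousOn X Ω) {C : ℝ}
    (hC : ∀ x ∈ Ω, ∀ y ∈ Ωᶜ, Metric.infDist x Ωᶜ = dist x y →
      |⟪x - y, X x⟫| ≤ C * Metric.infDist x Ωᶜ ^ 2) :
    Tendsto (fun n : ℕ => ∫ x in Ω, fderiv ℝ (infDistCutoff Ωᶜ n) x (X x) ∂μ) atTop (𝓝 0) := by
  have ae_differentiableAt : ∀ᵐ x ∂(μ.restrict Ω),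
      DifferentiableAt ℝ (fun z => Metric.infDist z Ωᶜ) x ∧
      ∀ n : ℕ, DifferentiableAt ℝ (infDistCutoff Ωᶜ n) x :=
    ae_restrict_of_ae ((Metric.lipschitz_infDist_pt Ωᶜ).ae_differentiableAt.and
      (ae_all_iff.2 fun n => lipschitzWith_infDistCutoff.ae_differentiableAt))
  rw [← integral_zero E ℝ (μ := μ.restrict Ω)]
  refine tendsto_integral_of_dominated_convergence (fun _ => 2 * |C|) (fun n => ?_)
    (integrableOn_const hΩμ) (fun n => ?_) ?_
  · exact (ContinuousLinearMap.id ℝ (E →L[ℝ] ℝ)).aestronglyMeasurable_comp₂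
      (measurable_fderiv ℝ _).aestronglyMeasurable (hX.aestronglyMeasurable hΩ.measurableSet)
  · filter_upwards [ae_restrict_mem hΩ.measurableSet, ae_differentiableAt] with x hx hdiff
    refine abs_fderiv_infDistCutoff_le (hdiff.2 n) hdiff.1 (abs_nonneg C)
      (abs_fderiv_infDist_le hΩ.isClosed_compl hne (notMem_compl_iff.2 hx) hdiff.1
        fun y hy hxy => (hC x hx y hy hxy).trans ?_)
    gcongr
    exact le_abs_self C
  · filter_upwards [ae_restrict_mem hΩ.measurableSet] with x hx
    refine tendsto_const_nhds.congr' ?_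
    filter_upwards [eventually_two_lt_mul_infDist
      ((hΩ.isClosed_compl.notMem_iff_infDist_pos hne).1 (notMem_compl_iff.2 hx))] with n hn
    rw [(infDistCutoff_eventuallyEq_one hn).fderiv_eq, fderiv_fun_const, Pi.zero_apply,
      _root_.zero_apply]

/-- A divergence theorem without regularity of the boundary: it is enough that near the boundary
`X` is almost orthogonal to the direction of the nearest boundary points. -/
theorem integral_divergence_eq_zero [Nontrivial E] (hΩ : IsOpen Ω) (hΩb : Bornology.IsBounded Ω)
    (hX : ContDiffOn ℝ 1 X Ω) (hdiv : IntegrableOn (divergence X) Ω μ) {C : ℝ}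
    (hC : ∀ x ∈ Ω, ∀ y ∈ Ωᶜ, Metric.infDist x Ωᶜ = dist x y →
      |⟪x - y, X x⟫| ≤ C * Metric.infDist x Ωᶜ ^ 2) :
    ∫ x in Ω, divergence X x ∂μ = 0 := by
  have hne : Ωᶜ.Nonempty := nonempty_compl.2 fun h =>
    NormedSpace.unbounded_univ ℝ E (h ▸ hΩb)
  have tsupport_subset (n : ℕ) : tsupport (infDistCutoff Ωᶜ n) ⊆ Ω :=
    tsupport_infDistCutoff_subset_compl.trans_eq (compl_compl Ω)
  have parts (n : ℕ) : -∫ x in Ω, fderiv ℝ (infDistCutoff Ωᶜ n) x (X x) ∂μ =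
      ∫ x in Ω, infDistCutoff Ωᶜ n x * divergence X x ∂μ := by
    rw [setIntegral_eq_integral_of_forall_compl_eq_zero fun x hx => by
        rw [fderiv_of_notMem_tsupport ℝ (notMem_subset (tsupport_subset n) hx),
          _root_.zero_apply],
      setIntegral_eq_integral_of_forall_compl_eq_zero fun x hx => by
        rw [image_eq_zero_of_notMem_tsupport (notMem_subset (tsupport_subset n) hx), zero_mul],
      integral_fderiv_apply_eq_neg lipschitzWith_infDistCutoff
        (Metric.isCompact_of_isClosed_isBounded (isClosed_tsupport _)
          (hΩb.subset (tsupport_subset n))) hΩ (tsupport_subset n) hX, neg_neg]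
  have lim := (tendsto_integral_fderiv_infDistCutoff hΩ hne hΩb.measure_lt_top.ne
    hX.continuousOn hC).neg.congr parts
  rw [tendsto_nhds_unique (tendsto_integral_infDistCutoff_mul hΩ hne hdiv) lim, neg_zero]

end DivergenceTheorem

end Divergence

section Curve

variable {E F : Type*} [NormedAddCommGroup E] [NormedSpace ℝ E]
  [NormedAddCommGroup F] [NormedSpace ℝ F] {S : Set E} {T : ℝ} {Γ : ℝ → E}

/-- `v` is the velocity at `p` of a curve contained in `S`: the notion of tangency of
`IsTangentAt`, in an arbitrary normed space. -/
def IsCurveVelocity (S : Set E) (p v : E) : Prop :=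
  ∃ c : ℝ → E, (∀ t, c t ∈ S) ∧ c 0 = p ∧ HasDerivAt c v 0

theorem IsCurveVelocity.map {S' : Set F} {p v : E} (h : IsCurveVelocity S p v) (L : E →L[ℝ] F)
    (hL : MapsTo L S S') : IsCurveVelocity S' (L p) (L v) := by
  obtain ⟨c, hcS, rfl, hc⟩ := h
  exact ⟨L ∘ c, fun t => hL (hcS t), rfl, L.hasFDerivAt.comp_hasDerivAt 0 hc⟩

/-- A regular parametrization, of period `T`, of a simple closed curve. -/
structure IsRegularClosedCurve (T : ℝ) (Γ : ℝ → E) : Prop where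
  pos : 0 < T
  periodic : Function.Periodic Γ T
  injOn : InjOn Γ (Ico 0 T)
  differentiable : Differentiable ℝ Γ
  deriv_ne_zero : ∀ t, deriv Γ t ≠ 0

theorem nhdsWithin_range_eq_map_of_periodic {X : Type*} [TopologicalSpace X] [T2Space X]
    {f : ℝ → X} (hT : 0 < T) (hf : Continuous f) (hper : Function.Periodic f T)
    (hinj : InjOn f (Ico 0 T)) (t : ℝ) : 𝓝[range f] (f t) = map f (𝓝 t) := by
  have : Fact (0 < T) := ⟨hT⟩
  have hlift : Function.Injective hper.lift := fun x y hxy => by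
    obtain ⟨s, hs, rfl⟩ := AddCircle.eq_coe_Ico x
    obtain ⟨s', hs', rfl⟩ := AddCircle.eq_coe_Ico y
    rw [hinj hs hs' hxy]
  have hemb : Topology.IsEmbedding hper.lift :=
    ((continuous_coinduced_dom.2 hf : Continuous hper.lift).isClosedEmbedding hlift).isEmbedding
  have hrange : range hper.lift = range f :=
    (QuotientAddGroup.mk_surjective.range_comp hper.lift).symm
  have h := hemb.map_nhds_eq (t : AddCircle T)
  rw [QuotientAddGroup.nhds_eq, map_map, hrange] at h
  exact h.symm

namespace IsRegularClosedCurve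

theorem map (hΓ : IsRegularClosedCurve T Γ) (L : E →L[ℝ] F) (hL : Function.Injective L) :
    IsRegularClosedCurve T (L ∘ Γ) where
  pos := hΓ.pos
  periodic := hΓ.periodic.comp L
  injOn := hL.injOn.comp hΓ.injOn (mapsTo_univ _ _)
  differentiable := L.differentiable.comp hΓ.differentiable
  deriv_ne_zero t := by
    rw [(L.hasFDerivAt.comp_hasDerivAt t (hΓ.differentiable t).hasDerivAt).deriv]
    exact (map_ne_zero_iff L hL).2 (hΓ.deriv_ne_zero t)

end IsRegularClosedCurve

end Curve

section CurveInner

variable {E : Type*} [NormedAddCommGroup E] [InnerProductSpace ℝ E] {S : Set E} {T : ℝ}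
  {Γ : ℝ → E}

theorem IsCurveVelocity.inner_sub_eq_zero {x p v : E} (h : IsCurveVelocity S p v)
    (hp : ∀ y ∈ S, dist x p ≤ dist x y) : ⟪x - p, v⟫ = 0 := by
  obtain ⟨c, hcS, rfl, hc⟩ := h
  have hderiv := (hc.const_sub x).norm_sq
  have hmin : IsLocalMin (fun t => ‖x - c t‖ ^ 2) 0 := Eventually.of_forall fun t => by
    simpa [dist_eq_norm] using! pow_le_pow_left₀ dist_nonneg (hp _ (hcS t)) 2
  simpa using hmin.hasDerivAt_eq_zero hderiv

namespace IsRegularClosedCurve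

theorem mem_span_deriv (hΓ : IsRegularClosedCurve T Γ) {t : ℝ} {w : E}
    (hw : IsCurveVelocity (range Γ) (Γ t) w) : w ∈ ℝ ∙ deriv Γ t := by
  obtain ⟨c, hcΓ, hc0, hc⟩ := hw
  let L := ContinuousLinearMap.id ℝ E - (ℝ ∙ deriv Γ t).starProjection
  have hL (v : E) : L v = 0 ↔ v ∈ ℝ ∙ deriv Γ t :=
    (sub_eq_zero (a := v)).trans (eq_comm.trans Submodule.starProjection_eq_self_iff)
  have hΓt := (hΓ.differentiable t).hasDerivAt
  have hLΓ : (fun s => L (Γ s - Γ t)) =o[𝓝 t] fun s => Γ s - Γ t := by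
    have h := (L.hasFDerivAt.comp_hasDerivAt t hΓt).isLittleO
    simp only [(hL _).2 (Submodule.mem_span_singleton_self _), smul_zero, sub_zero,
      Function.comp_apply, ← map_sub] at h
    have hΓrev := (hΓt.isTheta_sub (hΓ.deriv_ne_zero t)).isBigO_symm
    rw [prod_pure, Asymptotics.isBigO_map] at hΓrev
    exact h.trans_isBigO hΓrev
  have hLrange : (fun z => L (z - Γ t)) =o[𝓝[range Γ] (Γ t)] fun z => z - Γ t := by
    rw [nhdsWithin_range_eq_map_of_periodic hΓ.pos hΓ.differentiable.continuous hΓ.periodic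
      hΓ.injOn]
    exact Asymptotics.isLittleO_map.2 hLΓ
  have hc_tendsto : Tendsto c (𝓝 0) (𝓝[range Γ] (Γ t)) :=
    tendsto_nhdsWithin_iff.2 ⟨hc0 ▸ hc.continuousAt.tendsto, Eventually.of_forall hcΓ⟩
  have hLc : HasDerivAt (L ∘ c) 0 0 := by
    rw [hasDerivAt_iff_isLittleO]
    have h := (hLrange.comp_tendsto hc_tendsto).trans_isBigO
      (by simpa only [Function.comp_def, hc0] using hc.isBigO_sub)
    simpa only [Function.comp_def, hc0, map_sub, smul_zero, sub_zero] using h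
  exact (hL w).1 ((L.hasFDerivAt.comp_hasDerivAt 0 hc).unique hLc)

theorem eq_zero_of_forall_mem_span_deriv (hΓ : IsRegularClosedCurve T Γ) {w : E}
    (hw : ∀ t, w ∈ ℝ ∙ deriv Γ t) : w = 0 := by
  have hd (t : ℝ) : HasDerivAt (fun t => ⟪w, Γ t⟫) ⟪w, deriv Γ t⟫ t := by
    simpa using (hasDerivAt_const t w).inner ℝ (hΓ.differentiable t).hasDerivAt
  obtain ⟨t, -, ht⟩ := exists_hasDerivAt_eq_zero hΓ.pos
    (fun t _ => (hd t).continuousAt.continuousWithinAt)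
    (by simpa using congrArg (⟪w, ·⟫) (hΓ.periodic 0).symm) fun t _ => hd t
  obtain ⟨a, ha⟩ := Submodule.mem_span_singleton.1 (hw t)
  have hww : ⟪w, w⟫ = 0 := by
    nth_rewrite 2 [← ha]
    rw [inner_smul_right, ht, mul_zero]
  exact inner_self_eq_zero.1 hww

theorem eq_zero_of_fderiv_apply_self_eq_zero (hΓ : IsRegularClosedCurve T Γ) {V : E → E}
    (hV : ∀ t, DifferentiableAt ℝ V (Γ t)) (htan : ∀ t, IsCurveVelocity (range Γ) (Γ t) (V (Γ t)))
    (hker : ∀ t, fderiv ℝ V (Γ t) (V (Γ t)) = 0) (t : ℝ) : V (Γ t) = 0 := by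
  have hVΓ (t : ℝ) : HasDerivAt (V ∘ Γ) (fderiv ℝ V (Γ t) (deriv Γ t)) t :=
    (hV t).hasFDerivAt.comp_hasDerivAt t (hΓ.differentiable t).hasDerivAt
  have hspan (t : ℝ) := hΓ.mem_span_deriv (htan t)
  -- Where `V ≠ 0` it spans the tangent line, so `DV` kills the tangent.
  have hderiv (t : ℝ) (h : V (Γ t) ≠ 0) : fderiv ℝ V (Γ t) (deriv Γ t) = 0 := by
    obtain ⟨a, ha⟩ := Submodule.mem_span_singleton.1 (hspan t)
    have ha0 : a ≠ 0 := by rintro rfl; exact h (by rw [← ha, zero_smul])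
    have hk := hker t
    rw [← ha, map_smul] at hk
    exact (smul_eq_zero.1 hk).resolve_left ha0
  have hnorm (t : ℝ) : HasDerivAt (fun t => ‖V (Γ t)‖ ^ 2) 0 t := by
    have hinner : ⟪V (Γ t), fderiv ℝ V (Γ t) (deriv Γ t)⟫ = 0 := by
      by_cases h : V (Γ t) = 0
      · rw [h, inner_zero_left]
      · rw [hderiv t h, inner_zero_right]
    simpa [hinner] using (hVΓ t).norm_sq
  by_contra hne
  have hne_zero (s : ℝ) : V (Γ s) ≠ 0 := fun hs => hne <| by
    simpa [hs] using is_const_of_deriv_eq_zero (fun t => (hnorm t).differentiableAt)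
      (fun t => (hnorm t).deriv) t s
  have hconst (s : ℝ) : V (Γ s) = V (Γ t) :=
    is_const_of_deriv_eq_zero (fun t => (hVΓ t).differentiableAt)
      (fun t => (hVΓ t).deriv.trans (hderiv t (hne_zero t))) s t
  exact hne (hΓ.eq_zero_of_forall_mem_span_deriv fun s => hconst s ▸ hspan s)

end IsRegularClosedCurve

end CurveInner

section IrrotationalFlow

variable {E : Type*} [NormedAddCommGroup E] [InnerProductSpace ℝ E] {U Ω S : Set E} {τ : ℝ}
  {V : E → E}

/-- A curl-free vector field on `U` of constant divergence `τ`, of class `C¹` up to `S` and tangent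
to `S`. Having no curl is encoded as symmetry of the derivative. -/
structure IsIrrotationalFlow (U S : Set E) (τ : ℝ) (V : E → E) : Prop where
  contDiffOn : ∃ W, IsOpen W ∧ U ∪ S ⊆ W ∧ ContDiffOn ℝ 1 V W
  isSymmetric : ∀ z ∈ U, (fderiv ℝ V z : E →ₗ[ℝ] E).IsSymmetric
  divergence_eq : ∀ z ∈ U, divergence V z = τ
  tangent : ∀ z ∈ S, IsCurveVelocity S z (V z)

theorem exists_forall_hasFDerivAt_inner [SimplyConnectedSpace Ω] (hΩ : IsOpen Ω)
    (hV : DifferentiableOn ℝ V Ω)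
    (hsymm : ∀ z ∈ Ω, (fderiv ℝ V z : E →ₗ[ℝ] E).IsSymmetric) :
    ∃ φ : E → ℝ, ∀ z ∈ Ω, HasFDerivAt φ (innerSL ℝ (V z)) z := by
  have hω (z) (hz : z ∈ Ω) : HasFDerivAt (fun z => innerSL ℝ (V z))
      ((innerSL ℝ).comp (fderiv ℝ V z)) z :=
    (innerSL ℝ).hasFDerivAt.comp z (hV.differentiableAt (hΩ.mem_nhds hz)).hasFDerivAt
  refine exists_forall_hasFDerivAt_of_simplyConnected hΩ
    (fun z hz => (hω z hz).differentiableAt.differentiableWithinAt) fun z hz x y => ?_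
  simpa [(hω z hz).fderiv, real_inner_comm] using hsymm z hz x y

theorem abs_inner_sub_le_of_tangent_frontier (hΩ : IsOpen Ω) {L : ℝ}
    (hV : ∀ x ∈ closure Ω, DifferentiableAt ℝ V x) (hL : ∀ x ∈ closure Ω, ‖fderiv ℝ V x‖ ≤ L)
    (htan : ∀ y ∈ frontier Ω, IsCurveVelocity (frontier Ω) y (V y)) {x y : E} (hx : x ∈ Ω)
    (hy : y ∈ Ωᶜ) (hxy : Metric.infDist x Ωᶜ = dist x y) :
    |⟪x - y, V x⟫| ≤ L * Metric.infDist x Ωᶜ ^ 2 := by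
  have hball : Metric.closedBall x (dist x y) ⊆ closure Ω := by
    have hne : x ≠ y := fun h => hy (h ▸ hx)
    rw [← closure_ball x (dist_ne_zero.2 hne), ← hxy]
    exact closure_mono Metric.ball_infDist_compl_subset
  have hxball : x ∈ Metric.closedBall x (dist x y) := Metric.mem_closedBall_self dist_nonneg
  have hyball : y ∈ Metric.closedBall x (dist x y) := (dist_comm y x).le
  have horth : ⟪x - y, V y⟫ = 0 := by
    refine (htan y ⟨hball hyball, by rwa [hΩ.interior_eq]⟩).inner_sub_eq_zero fun z hz => ?_
    rw [← hxy]
    exact Metric.infDist_le_dist_of_mem (hΩ.interior_eq ▸ hz.2)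
  have hlip : ‖V x - V y‖ ≤ L * ‖x - y‖ :=
    (convex_closedBall x _).norm_image_sub_le_of_norm_fderiv_le (𝕜 := ℝ)
      (fun z hz => hV z (hball hz)) (fun z hz => hL z (hball hz)) hyball hxball
  calc |⟪x - y, V x⟫| = |⟪x - y, V x - V y⟫| := by rw [inner_sub_right, horth, sub_zero]
    _ ≤ ‖x - y‖ * ‖V x - V y‖ := abs_real_inner_le_norm _ _
    _ ≤ ‖x - y‖ * (L * ‖x - y‖) := by gcongr
    _ = L * Metric.infDist x Ωᶜ ^ 2 := by rw [hxy, dist_eq_norm]; ring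

theorem divergence_smul {f : E → ℝ} {X : E → E} {x : E} [FiniteDimensional ℝ E]
    (hf : DifferentiableAt ℝ f x) (hX : DifferentiableAt ℝ X x) :
    divergence (fun y => f y • X y) x = f x * divergence X x + fderiv ℝ f x (X x) := by
  simp only [divergence, fderiv_fun_smul hf hX, ContinuousLinearMap.toLinearMap_add,
    ContinuousLinearMap.toLinearMap_smul, map_add, map_smul, smul_eq_mul]
  congr 1
  exact LinearMap.trace_smulRight _ _

theorem eqOn_zero_of_setIntegral_eq_zero {X : Type*} [TopologicalSpace X] [MeasurableSpace X]
    [OpensMeasurableSpace X] {μ : Measure X} [μ.IsOpenPosMeasure] {Ω : Set X} {f : X → ℝ}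
    (hΩ : IsOpen Ω) (hf : ContinuousOn f Ω) (hf_nonneg : ∀ x ∈ Ω, 0 ≤ f x)
    (hfi : IntegrableOn f Ω μ) (h : ∫ x in Ω, f x ∂μ = 0) : EqOn f 0 Ω := by
  have hae : 0 ≤ᵐ[μ.restrict Ω] f := (ae_restrict_mem hΩ.measurableSet).mono hf_nonneg
  exact Measure.eqOn_open_of_ae_eq ((setIntegral_eq_zero_iff_of_nonneg_ae hae hfi).1 h) hΩ hf
    continuousOn_const

theorem contDiffOn_one_of_hasFDerivAt {F G : Type*} [NormedAddCommGroup F] [NormedSpace ℝ F]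
    [NormedAddCommGroup G] [NormedSpace ℝ G] {U : Set F} {f : F → G} {f' : F → F →L[ℝ] G}
    (hU : IsOpen U) (hf : ∀ x ∈ U, HasFDerivAt f (f' x) x) (hf' : ContinuousOn f' U) :
    ContDiffOn ℝ 1 f U := by
  rw [← zero_add 1, contDiffOn_succ_iff_fderiv_of_isOpen hU]
  refine ⟨fun x hx => (hf x hx).differentiableAt.differentiableWithinAt, by simp, ?_⟩
  exact contDiffOn_zero.2 (hf'.congr fun x hx => (hf x hx).fderiv)

namespace IsIrrotationalFlow

theorem contDiffAt (hV : IsIrrotationalFlow U S τ V) {z : E} (hz : z ∈ U ∪ S) :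
    ContDiffAt ℝ 1 V z := by
  obtain ⟨W, hW, hUW, hVW⟩ := hV.contDiffOn
  exact hVW.contDiffAt (hW.mem_nhds (hUW hz))

theorem differentiableAt (hV : IsIrrotationalFlow U S τ V) {z : E} (hz : z ∈ U ∪ S) :
    DifferentiableAt ℝ V z :=
  (hV.contDiffAt hz).differentiableAt one_ne_zero

theorem continuousAt_fderiv (hV : IsIrrotationalFlow U S τ V) {z : E} (hz : z ∈ U ∪ S) :
    ContinuousAt (fderiv ℝ V) z :=
  ((hV.contDiffAt hz).fderiv_right (m := 0) le_rfl).continuousAt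

theorem contDiffOn_arctan_smul {φ : E → ℝ} (hV : IsIrrotationalFlow Ω S τ V) (hΩ : IsOpen Ω)
    (hφ : ∀ z ∈ Ω, HasFDerivAt φ (innerSL ℝ (V z)) z) :
    ContDiffOn ℝ 1 (fun z => Real.arctan (φ z) • V z) Ω := by
  have hVΩ : ContDiffOn ℝ 1 V Ω := fun z hz => (hV.contDiffAt (Or.inl hz)).contDiffWithinAt
  have hφC : ContDiffOn ℝ 1 φ Ω := contDiffOn_one_of_hasFDerivAt hΩ hφ
    ((innerSL ℝ).continuous.comp_continuousOn hVΩ.continuousOn)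
  exact (Real.contDiff_arctan.comp_contDiffOn hφC).smul hVΩ

variable [FiniteDimensional ℝ E]

theorem exists_bound_of_isBounded (hV : IsIrrotationalFlow Ω (frontier Ω) τ V) (hΩ : IsOpen Ω)
    (hΩb : Bornology.IsBounded Ω) :
    ∃ C, ∀ x ∈ Ω, ‖V x‖ ≤ C ∧ ∀ y ∈ Ωᶜ, Metric.infDist x Ωᶜ = dist x y →
      |⟪x - y, V x⟫| ≤ C * Metric.infDist x Ωᶜ ^ 2 := by
  have hclosure {z : E} (hz : z ∈ closure Ω) : z ∈ Ω ∪ frontier Ω :=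
    closure_eq_self_union_frontier Ω ▸ hz
  obtain ⟨B, hB⟩ := hΩb.isCompact_closure.exists_bound_of_continuousOn (f := V)
    fun z hz => (hV.differentiableAt (hclosure hz)).continuousAt.continuousWithinAt
  obtain ⟨L, hL⟩ := hΩb.isCompact_closure.exists_bound_of_continuousOn
    fun z hz => (hV.continuousAt_fderiv (hclosure hz)).continuousWithinAt
  refine ⟨max B L, fun x hx => ⟨(hB x (subset_closure hx)).trans (le_max_left _ _),
    fun y hy hxy => ?_⟩⟩
  exact abs_inner_sub_le_of_tangent_frontier hΩ (fun z hz => hV.differentiableAt (hclosure hz))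
    (fun z hz => (hL z hz).trans (le_max_right _ _)) hV.tangent hx hy hxy

variable [Nontrivial E]

theorem divergence_const_eq_zero (hV : IsIrrotationalFlow Ω (frontier Ω) τ V) (hΩ : IsOpen Ω)
    (hΩb : Bornology.IsBounded Ω) (hne : Ω.Nonempty) : τ = 0 := by
  borelize E
  let μ : Measure E := Measure.addHaar
  have hτ : EqOn (divergence V) (fun _ => τ) Ω := hV.divergence_eq
  have hτi : IntegrableOn (fun _ => τ) Ω μ := integrableOn_const hΩb.measure_lt_top.ne
  obtain ⟨C, hC⟩ := hV.exists_bound_of_isBounded hΩ hΩb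
  have hint := integral_divergence_eq_zero (μ := μ) hΩ hΩb
    (fun z hz => (hV.contDiffAt (Or.inl hz)).contDiffWithinAt)
    (hτi.congr_fun hτ.symm hΩ.measurableSet) fun x hx => (hC x hx).2
  rw [setIntegral_congr_fun hΩ.measurableSet hτ, setIntegral_const, smul_eq_zero] at hint
  exact hint.resolve_left ((measureReal_ne_zero_iff hΩb.measure_lt_top.ne).2
    (hΩ.measure_pos μ hne).ne')

theorem eqOn_zero [SimplyConnectedSpace Ω] (hV : IsIrrotationalFlow Ω (frontier Ω) 0 V)
    (hΩ : IsOpen Ω) (hΩb : Bornology.IsBounded Ω) : EqOn V 0 Ω := by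
  borelize E
  let μ : Measure E := Measure.addHaar
  obtain ⟨φ, hφ⟩ := exists_forall_hasFDerivAt_inner hΩ
    (fun z hz => (hV.differentiableAt (Or.inl hz)).differentiableWithinAt) hV.isSymmetric
  -- The factor `arctan φ` is bounded even if the potential `φ` is not, so `arctan φ • V` still
  -- satisfies the boundary condition of the divergence theorem.
  let X (z : E) : E := Real.arctan (φ z) • V z
  have hdiv (z) (hz : z ∈ Ω) : divergence X z = ‖V z‖ ^ 2 / (1 + φ z ^ 2) := by
    rw [divergence_smul (hφ z hz).arctan.differentiableAt (hV.differentiableAt (Or.inl hz)),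
      hV.divergence_eq z hz, (hφ z hz).arctan.fderiv, mul_zero, zero_add]
    simp [div_eq_inv_mul]
  have hdiv_nonneg (z) (hz : z ∈ Ω) : 0 ≤ divergence X z := by rw [hdiv z hz]; positivity
  have hX : ContDiffOn ℝ 1 X Ω := hV.contDiffOn_arctan_smul hΩ hφ
  have hXc := continuousOn_divergence hX hΩ
  obtain ⟨C, hC⟩ := hV.exists_bound_of_isBounded hΩ hΩb
  have hXi : IntegrableOn (divergence X) Ω μ := by
    refine IntegrableOn.of_bound hΩb.measure_lt_top (hXc.aestronglyMeasurable hΩ.measurableSet)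
      (C ^ 2) ((ae_restrict_mem hΩ.measurableSet).mono fun z hz => ?_)
    rw [Real.norm_of_nonneg (hdiv_nonneg z hz), hdiv z hz]
    exact (div_le_self (sq_nonneg _) (by nlinarith [sq_nonneg (φ z)])).trans
      (pow_le_pow_left₀ (norm_nonneg _) (hC z hz).1 2)
  have hint : ∫ z in Ω, divergence X z ∂μ = 0 := by
    refine integral_divergence_eq_zero hΩ hΩb hX hXi (C := Real.pi / 2 * C) fun x hx y hy hxy => ?_
    rw [inner_smul_right, abs_mul, mul_assoc]
    gcongr
    · exact abs_le.2 ⟨by linarith [Real.neg_pi_div_two_lt_arctan (φ x)],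
        (Real.arctan_lt_pi_div_two (φ x)).le⟩
    · exact (hC x hx).2 y hy hxy
  intro z hz
  have hz0 := eqOn_zero_of_setIntegral_eq_zero hΩ hXc hdiv_nonneg hXi hint hz
  rw [hdiv z hz, Pi.zero_apply, div_eq_zero_iff, or_iff_left (by positivity)] at hz0
  simpa using hz0

end IsIrrotationalFlow

end IrrotationalFlow

section ComplexPlane

open scoped ComplexConjugate

theorem conj_apply_eq_mul_conj_apply_one {D : ℂ →L[ℝ] ℂ}
    (hD : (D : ℂ →ₗ[ℝ] ℂ).IsSymmetric) (htrace : LinearMap.trace ℝ ℂ (D : ℂ →ₗ[ℝ] ℂ) = 0) (z : ℂ) :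
    conj (D z) = z * conj (D 1) := by
  have hsymm : (D 1).im = (D Complex.I).re := by
    simpa [Complex.inner] using hD 1 Complex.I
  have htr : (D 1).re + (D Complex.I).im = 0 := by
    simpa [LinearMap.trace_eq_sum_inner _ Complex.orthonormalBasisOneI, Complex.inner] using htrace
  have hDz : D z = z.re • D 1 + z.im • D Complex.I := by
    rw [← map_smul, ← map_smul, ← map_add]
    simp [Complex.re_add_im]
  rw [hDz]
  apply Complex.ext <;>
    simp only [Complex.conj_re, Complex.conj_im, Complex.add_re, Complex.add_im, Complex.smul_re,
      Complex.smul_im, Complex.mul_re, Complex.mul_im, smul_eq_mul]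
  · linear_combination -z.im * hsymm
  · linear_combination -z.im * htr

theorem differentiable_indicator {𝕜 E F : Type*} [NontriviallyNormedField 𝕜]
    [NormedAddCommGroup E] [NormedSpace 𝕜 E] [NormedAddCommGroup F] [NormedSpace 𝕜 F] {U : Set E}
    {f : E → F} (hU : IsOpen U) (hf : DifferentiableOn 𝕜 f U)
    (hf0 : ∀ x ∈ frontier U, f x = 0 ∧ HasFDerivAt f (0 : E →L[𝕜] F) x) :
    Differentiable 𝕜 (U.indicator f) := by
  intro x
  by_cases hxU : x ∈ U
  · exact (hf.differentiableAt (hU.mem_nhds hxU)).congr_of_eventuallyEq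
      ((eqOn_indicator (f := f)).eventuallyEq_of_mem (hU.mem_nhds hxU))
  by_cases hx : x ∈ closure U
  · obtain ⟨hfx, hfx'⟩ := hf0 x ⟨hx, by rwa [hU.interior_eq]⟩
    have hind : HasFDerivAt (U.indicator f) (0 : E →L[𝕜] F) x := by
      refine .of_isLittleO <| (Asymptotics.IsBigO.of_bound 1 <|
        .of_forall fun y => ?_).trans_isLittleO hfx'.isLittleO
      simpa [indicator_of_notMem hxU, hfx] using norm_indicator_le_norm_self f y
    exact hind.differentiableAt
  · refine (differentiableAt_const (0 : F)).congr_of_eventuallyEq ?_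
    filter_upwards [isClosed_closure.isOpen_compl.mem_nhds hx] with y hy
    exact indicator_of_notMem (fun h => hy (subset_closure h)) f

namespace IsIrrotationalFlow

variable {U S : Set ℂ} {V : ℂ → ℂ}

theorem conj_fderiv_apply (hV : IsIrrotationalFlow U S 0 V) {z : ℂ} (hz : z ∈ closure U)
    (hzS : z ∈ U ∪ S) (w : ℂ) : conj (fderiv ℝ V z w) = w * conj (fderiv ℝ V z 1) := by
  have hclosed : IsClosed {D : ℂ →L[ℝ] ℂ | conj (D w) = w * conj (D 1)} :=
    isClosed_eq (by fun_prop) (by fun_prop)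
  refine hclosed.closure_subset
    ((hV.continuousAt_fderiv hzS).continuousWithinAt.mem_closure hz fun y hy => ?_)
  exact conj_apply_eq_mul_conj_apply_one (hV.isSymmetric y hy) (hV.divergence_eq y hy) w

theorem differentiableOn_conj (hV : IsIrrotationalFlow U S 0 V) :
    DifferentiableOn ℂ (fun z => conj (V z)) U := by
  intro z hz
  have hconj : HasFDerivAt (fun z => conj (V z))
      ((Complex.conjCLE : ℂ →L[ℝ] ℂ).comp (fderiv ℝ V z)) z :=
    Complex.conjCLE.hasFDerivAt.comp z (hV.differentiableAt (Or.inl hz)).hasFDerivAt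
  refine (differentiableAt_complex_iff_differentiableAt_real.2
    ⟨hconj.differentiableAt, ?_⟩).differentiableWithinAt
  rw [hconj.fderiv]
  exact hV.conj_fderiv_apply (subset_closure hz) (Or.inl hz) Complex.I

theorem eqOn_zero_of_frontier (hV : IsIrrotationalFlow U S 0 V) (hU : IsOpen U)
    (hV0 : ∀ z ∈ frontier U, V z = 0 ∧ HasFDerivAt V (0 : ℂ →L[ℝ] ℂ) z)
    (hne : (interior Uᶜ).Nonempty) : EqOn V 0 U := by
  let f (z : ℂ) : ℂ := conj (V z)
  have hdiff : Differentiable ℂ (U.indicator f) := by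
    refine differentiable_indicator hU (hV.differentiableOn_conj) fun z hz => ?_
    obtain ⟨hVz, hVz'⟩ := hV0 z hz
    exact ⟨by simp [f, hVz], hasFDerivAt_of_restrictScalars ℝ
      (Complex.conjCLE.hasFDerivAt.comp z hVz') (by ext; simp)⟩
  obtain ⟨z₀, hz₀⟩ := hne
  have hzero : U.indicator f =ᶠ[𝓝 z₀] 0 := by
    filter_upwards [isOpen_interior.mem_nhds hz₀] with z hz
    exact indicator_of_notMem (interior_subset hz) f
  have hind : U.indicator f = 0 :=
    (hdiff.differentiableOn.analyticOnNhd isOpen_univ).eq_of_eventuallyEq analyticOnNhd_const hzero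
  intro z hz
  simpa [f, hz] using congrFun hind z

theorem hasFDerivAt_zero_of_comp_eq_zero (hV : IsIrrotationalFlow U S 0 V) {Γ : ℝ → ℂ} {t : ℝ}
    (hΓ : DifferentiableAt ℝ Γ t) (hΓ' : deriv Γ t ≠ 0) (hVΓ : V ∘ Γ = 0)
    (ht : Γ t ∈ closure U) (htS : Γ t ∈ U ∪ S) : HasFDerivAt V (0 : ℂ →L[ℝ] ℂ) (Γ t) := by
  have hVt := (hV.differentiableAt htS).hasFDerivAt
  have htangent : fderiv ℝ V (Γ t) (deriv Γ t) = 0 :=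
    (hVΓ ▸ hVt.comp_hasDerivAt t hΓ.hasDerivAt).unique (hasDerivAt_const t 0)
  have hone : conj (fderiv ℝ V (Γ t) 1) = 0 := by
    simpa [htangent, hΓ'] using hV.conj_fderiv_apply ht htS (deriv Γ t)
  have hzero : fderiv ℝ V (Γ t) = 0 := by
    ext w
    simpa [hone] using hV.conj_fderiv_apply ht htS w
  rwa [hzero] at hVt

end IsIrrotationalFlow

end ComplexPlane

section JordanDomain

variable {E F : Type*} [NormedAddCommGroup E] [NormedSpace ℝ E]
  [NormedAddCommGroup F] [NormedSpace ℝ F] {T : ℝ}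

/-- A bounded simply connected domain `Ω` enclosed by the simple closed curve `Γ` of period `T`,
for which only differentiability with nonvanishing derivative is required. -/
structure IsRegularJordanDomain (T : ℝ) (Γ : ℝ → E) (Ω : Set E) : Prop
    extends IsRegularClosedCurve T Γ where
  isOpen : IsOpen Ω
  isBounded : Bornology.IsBounded Ω
  simplyConnectedSpace : SimplyConnectedSpace Ω
  frontier_eq : frontier Ω = range Γ

namespace IsRegularJordanDomain

theorem closure_eq {Γ : ℝ → E} {Ω : Set E} (hΩ : IsRegularJordanDomain T Γ Ω) :
    closure Ω = Ω ∪ range Γ := by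
  rw [closure_eq_self_union_frontier, hΩ.frontier_eq]

theorem preimage {Γ : ℝ → F} {Ω : Set F} (hΩ : IsRegularJordanDomain T Γ Ω) (L : E ≃L[ℝ] F) :
    IsRegularJordanDomain T (L.symm ∘ Γ) (L ⁻¹' Ω) where
  toIsRegularClosedCurve :=
    hΩ.toIsRegularClosedCurve.map (L.symm : F →L[ℝ] E) L.symm.injective
  isOpen := hΩ.isOpen.preimage L.continuous
  isBounded := by
    rw [← L.image_symm_eq_preimage]
    exact (L.symm : F →L[ℝ] E).lipschitz.isBounded_image hΩ.isBounded
  simplyConnectedSpace := by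
    have := hΩ.simplyConnectedSpace
    exact (L.toHomeomorph.subtype fun _ => Iff.rfl :
      (L ⁻¹' Ω : Set E) ≃ₜ Ω).toHomotopyEquiv.simplyConnectedSpace
  frontier_eq := by
    rw [range_comp, ← hΩ.frontier_eq, L.image_symm_eq_preimage]
    exact (L.toHomeomorph.preimage_frontier Ω).symm

variable {Γ : ℝ → ℂ} {Ω : Set ℂ} {τ : ℝ} {Vm Vp : ℂ → ℂ}

theorem eqOn_zero_interior (hΩ : IsRegularJordanDomain T Γ Ω)
    (hV : IsIrrotationalFlow Ω (range Γ) τ Vm) : τ = 0 ∧ EqOn Vm 0 Ω := by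
  have := hΩ.simplyConnectedSpace
  rw [← hΩ.frontier_eq] at hV
  obtain rfl : τ = 0 :=
    hV.divergence_const_eq_zero hΩ.isOpen hΩ.isBounded (nonempty_coe_sort.1 inferInstance)
  exact ⟨rfl, hV.eqOn_zero hΩ.isOpen hΩ.isBounded⟩

theorem eqOn_zero_exterior (hΩ : IsRegularJordanDomain T Γ Ω)
    (hV : IsIrrotationalFlow (closure Ω)ᶜ (range Γ) 0 Vp)
    (hker : ∀ t, fderiv ℝ Vp (Γ t) (Vp (Γ t)) = 0) : EqOn Vp 0 (closure Ω)ᶜ := by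
  have hVΓ : Vp ∘ Γ = 0 := funext <| hΩ.eq_zero_of_fderiv_apply_self_eq_zero
    (fun t => hV.differentiableAt (Or.inr (mem_range_self t)))
    (fun t => hV.tangent _ (mem_range_self t)) hker
  have hfrontier : frontier (closure Ω)ᶜ ⊆ range Γ := by
    rw [frontier_compl, ← hΩ.frontier_eq]
    exact frontier_closure_subset
  refine hV.eqOn_zero_of_frontier isClosed_closure.isOpen_compl (fun z hz => ?_) ?_
  · obtain ⟨t, rfl⟩ := hfrontier hz
    exact ⟨congrFun hVΓ t, hV.hasFDerivAt_zero_of_comp_eq_zero (hΩ.differentiable t)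
      (hΩ.deriv_ne_zero t) hVΓ (frontier_subset_closure hz) (Or.inr (mem_range_self t))⟩
  · have := hΩ.simplyConnectedSpace
    rw [compl_compl]
    exact (nonempty_coe_sort.1 (inferInstance : Nonempty Ω)).mono
      (interior_maximal subset_closure hΩ.isOpen)

theorem eqOn_zero_of_jump_mem_ker (hΩ : IsRegularJordanDomain T Γ Ω)
    (hVm : IsIrrotationalFlow Ω (range Γ) τ Vm)
    (hVp : IsIrrotationalFlow (closure Ω)ᶜ (range Γ) τ Vp)
    (hker : ∀ z ∈ range Γ, (fderiv ℝ Vp z + fderiv ℝ Vm z) (Vp z - Vm z) = 0) :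
    τ = 0 ∧ EqOn Vm 0 Ω ∧ EqOn Vp 0 (closure Ω)ᶜ := by
  obtain ⟨rfl, hVm0⟩ := hΩ.eqOn_zero_interior hVm
  refine ⟨rfl, hVm0, hΩ.eqOn_zero_exterior hVp fun t => ?_⟩
  have htS : Γ t ∈ Ω ∪ range Γ := Or.inr (mem_range_self t)
  have ht : Γ t ∈ closure Ω := hΩ.closure_eq ▸ htS
  have hDVm0 : MapsTo (fderiv ℝ Vm) Ω {0} := fun z hz => by
    rw [mem_singleton_iff, (hVm0.eventuallyEq_of_mem (hΩ.isOpen.mem_nhds hz)).fderiv_eq]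
    exact fderiv_const_apply 0
  have hVt : Vm (Γ t) ∈ closure {0} :=
    (hVm.differentiableAt htS).continuousAt.continuousWithinAt.mem_closure ht hVm0
  have hDVt : fderiv ℝ Vm (Γ t) ∈ closure {0} :=
    (hVm.continuousAt_fderiv htS).continuousWithinAt.mem_closure ht hDVm0
  rw [closure_singleton, mem_singleton_iff] at hVt hDVt
  simpa [hVt, hDVt] using hker (Γ t) (mem_range_self t)

end IsRegularJordanDomain

end JordanDomain

section CompressedField

/-- The orthogonal projection of `ℝ³` onto the horizontal plane, identified with `ℂ`. -/
def toPlane : E3 →L[ℝ] ℂ :=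
  (Complex.equivRealProdCLM.symm : ℝ × ℝ →L[ℝ] ℂ).comp
    ((EuclideanSpace.proj 0).prod (EuclideanSpace.proj 1))

/-- The inclusion of `ℂ` in `ℝ³` as the horizontal plane. -/
def ofPlane : ℂ →L[ℝ] E3 :=
  Complex.reCLM.smulRight (e3 0) + Complex.imCLM.smulRight (e3 1)

theorem e3_apply (i j : Fin 3) : e3 i j = if j = i then 1 else 0 :=
  PiLp.single_apply ..

theorem inner_e3_right (p : E3) (i : Fin 3) : ⟪p, e3 i⟫ = p i := by
  simp [e3, EuclideanSpace.inner_single_right]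

@[simp] theorem toPlane_re (p : E3) : (toPlane p).re = p 0 := by simp [toPlane]

@[simp] theorem toPlane_im (p : E3) : (toPlane p).im = p 1 := by simp [toPlane]

theorem equivRealProdCLM_toPlane (p : E3) :
    Complex.equivRealProdCLM (toPlane p) = (p 0, p 1) := by
  simp [toPlane]

theorem ofPlane_apply (z : ℂ) : ofPlane z = mk3 z.re z.im 0 := by
  ext i
  fin_cases i <;> simp [ofPlane, e3_apply, mk3]

theorem ofPlane_one : ofPlane 1 = e3 0 := by simp [ofPlane]

theorem ofPlane_I : ofPlane Complex.I = e3 1 := by simp [ofPlane]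

@[simp] theorem toPlane_ofPlane (z : ℂ) : toPlane (ofPlane z) = z := by
  apply Complex.ext <;> simp [ofPlane, e3_apply]

theorem toPlane_e3_two : toPlane (e3 2) = 0 := by
  apply Complex.ext <;> simp [e3_apply]

theorem ofPlane_toPlane_add_smul_e3 (p : E3) : ofPlane (toPlane p) + p 2 • e3 2 = p := by
  ext i
  fin_cases i <;> simp [ofPlane, e3_apply]

theorem isSymmetric_compress {D : E3 →L[ℝ] E3} (hD : D (e3 0) 1 = D (e3 1) 0) :
    ((toPlane.comp (D.comp ofPlane) : ℂ →L[ℝ] ℂ) : ℂ →ₗ[ℝ] ℂ).IsSymmetric := by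
  let C : ℂ →L[ℝ] ℂ := toPlane.comp (D.comp ofPlane)
  have hC : (C 1).im = (C Complex.I).re := by simpa [C, ofPlane_one, ofPlane_I] using hD
  have hCz (z : ℂ) : C z = z.re • C 1 + z.im • C Complex.I := by
    rw [← map_smul, ← map_smul, ← map_add]
    simp [Complex.re_add_im]
  intro x y
  change ⟪C x, y⟫ = ⟪x, C y⟫
  rw [hCz x, hCz y]
  simp only [Complex.inner, Complex.mul_re, Complex.conj_re, Complex.conj_im, Complex.add_re,
    Complex.add_im, Complex.smul_re, Complex.smul_im, smul_eq_mul]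
  linear_combination (x.re * y.im - y.re * x.im) * hC

theorem trace_compress (D : E3 →L[ℝ] E3) :
    LinearMap.trace ℝ ℂ (toPlane.comp (D.comp ofPlane) : ℂ →L[ℝ] ℂ) =
      D (e3 0) 0 + D (e3 1) 1 := by
  simp [LinearMap.trace_eq_sum_inner _ Complex.orthonormalBasisOneI, Complex.inner, ofPlane_one,
    ofPlane_I]

theorem eq_zero_of_isSymmetric_of_compress_eq_zero {A : E3 →L[ℝ] E3}
    (hA : (A : E3 →ₗ[ℝ] E3).IsSymmetric) (hplane : ∀ z, toPlane (A (ofPlane z)) = 0)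
    (hvert : A (e3 2) = 0) : A = 0 := by
  ext1 p
  have hheight : A p 2 = 0 := by
    simpa [hvert, inner_e3_right] using hA p (e3 2)
  have hproj : toPlane (A p) = 0 := by
    rw [← ofPlane_toPlane_add_smul_e3 p, map_add, map_smul, hvert, smul_zero, add_zero, hplane]
  rw [← ofPlane_toPlane_add_smul_e3 (A p), hproj, hheight, map_zero, zero_smul, add_zero]
  rfl

/-- The planar vector field induced by a vector field on `ℝ³`: restriction to the horizontal plane
followed by projection. -/
def planarField (u : E3 → E3) (z : ℂ) : ℂ :=
  toPlane (u (ofPlane z))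

variable {u : E3 → E3} {z : ℂ}

theorem hasFDerivAt_planarField (hu : DifferentiableAt ℝ u (ofPlane z)) :
    HasFDerivAt (planarField u) (toPlane.comp ((fderiv ℝ u (ofPlane z)).comp ofPlane)) z :=
  toPlane.hasFDerivAt.comp z (hu.hasFDerivAt.comp z ofPlane.hasFDerivAt)

theorem isSymmetric_fderiv_planarField (hu : DifferentiableAt ℝ u (ofPlane z))
    (hcurl : curl3 u (ofPlane z) = 0) :
    (fderiv ℝ (planarField u) z : ℂ →ₗ[ℝ] ℂ).IsSymmetric := by
  rw [(hasFDerivAt_planarField hu).fderiv]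
  exact isSymmetric_compress (sub_eq_zero.1 (congrFun (congrArg WithLp.ofLp hcurl) 2))

theorem divergence_planarField (hu : DifferentiableAt ℝ u (ofPlane z)) :
    divergence (planarField u) z = div3 u (ofPlane z) - pder u 2 2 (ofPlane z) := by
  rw [divergence, (hasFDerivAt_planarField hu).fderiv, trace_compress]
  simp [div3, pder, Fin.sum_univ_three]

theorem grad3_inner_apply (B : E3 →L[ℝ] E3) (p : E3) :
    grad3 (fun p => ⟪p, B p⟫) p = (B + B.adjoint) p := by
  have hB : HasFDerivAt (fun p => ⟪p, B p⟫) _ p := (hasFDerivAt_id p).inner ℝ B.hasFDerivAt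
  ext i
  calc fderiv ℝ (fun p => ⟪p, B p⟫) p (e3 i)
    _ = ⟪p, B (e3 i)⟫ + ⟪e3 i, B p⟫ := by
      rw [hB.fderiv]
      simp [fderivInnerCLM_apply]
    _ = ⟪(B + B.adjoint) p, e3 i⟫ := by
      rw [_root_.add_apply, inner_add_left, ContinuousLinearMap.adjoint_inner_left, add_comm,
        real_inner_comm (B p)]
    _ = (B + B.adjoint) p i := inner_e3_right _ i

theorem eq_zero_of_forall_norm_le {E F : Type*} [NormedAddCommGroup E] [NormedSpace ℝ E]
    [NormedAddCommGroup F] [NormedSpace ℝ F] {K : Set E} (hK : Bornology.IsBounded K)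
    {L : E →L[ℝ] F} {M : ℝ} (hL : ∀ x ∈ Kᶜ, ‖L x‖ ≤ M) : L = 0 := by
  have hrange : Bornology.IsBounded (range L) := by
    rw [← image_univ, ← union_compl_self K, image_union]
    exact (L.lipschitz.isBounded_image hK).union
      (isBounded_iff_forall_norm_le.2 ⟨M, forall_mem_image.2 hL⟩)
  by_contra hne
  obtain ⟨x, hx⟩ := DFunLike.ne_iff.1 hne
  have : Nontrivial (L : E →ₗ[ℝ] F).range := ⟨⟨L x, x, rfl⟩, 0, fun h => hx congr($h)⟩
  refine NormedSpace.unbounded_univ ℝ (L : E →ₗ[ℝ] F).range ?_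
  rw [← Bornology.isBounded_image_subtype_val, image_univ, Subtype.range_val]
  exact hrange

end CompressedField

section Cylinder

open Complex (equivRealProdCLM)

/-- A divergence-free and curl-free vector field `u = (v, 0) + A` on `U × ℝ`, tangent to the
cylinder `S × ℝ`, where the planar field `v` is of class `C¹` up to `S` and `A` is linear. -/
structure IsCylinderFlow (A : E3 →L[ℝ] E3) (v : ℝ × ℝ → ℝ × ℝ) (U S : Set (ℝ × ℝ))
    (u : E3 → E3) : Prop where
  apply_eq : ∀ p : E3, u p = mk3 (v (p 0, p 1)).1 (v (p 0, p 1)).2 0 + A p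
  contDiffOn : ∃ W, IsOpen W ∧ U ∪ S ⊆ W ∧ ContDiffOn ℝ 1 v W
  div_eq_zero : ∀ p : E3, (p 0, p 1) ∈ U → div3 u p = 0
  curl_eq_zero : ∀ p : E3, (p 0, p 1) ∈ U → curl3 u p = 0
  tangent : ∀ p ∈ {p : E3 | (p 0, p 1) ∈ S}, IsTangentAt {p : E3 | (p 0, p 1) ∈ S} p (u p)

namespace IsCylinderFlow

variable {A : E3 →L[ℝ] E3} {v vm vp : ℝ × ℝ → ℝ × ℝ} {U Um Up S : Set (ℝ × ℝ)}
  {u um up : E3 → E3} {z : ℂ} {p : E3}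

theorem eq_ofPlane_add (hu : IsCylinderFlow A v U S u) (p : E3) :
    u p = ofPlane (equivRealProdCLM.symm (v (equivRealProdCLM (toPlane p)))) + A p := by
  rw [hu.apply_eq, ofPlane_apply, equivRealProdCLM_toPlane]
  simp

theorem planarField_eq (hu : IsCylinderFlow A v U S u) (z : ℂ) :
    planarField u z =
      equivRealProdCLM.symm (v (equivRealProdCLM z)) + toPlane (A (ofPlane z)) := by
  rw [planarField, hu.eq_ofPlane_add, map_add, toPlane_ofPlane, toPlane_ofPlane]

theorem contDiffOn_comp (hu : IsCylinderFlow A v U S u) :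
    ∃ W, IsOpen W ∧ equivRealProdCLM ⁻¹' U ∪ equivRealProdCLM ⁻¹' S ⊆ W ∧
      ContDiffOn ℝ 1 (equivRealProdCLM.symm ∘ v ∘ equivRealProdCLM) W := by
  obtain ⟨W, hW, hUW, hv⟩ := hu.contDiffOn
  exact ⟨equivRealProdCLM ⁻¹' W, hW.preimage equivRealProdCLM.continuous, preimage_mono hUW,
    equivRealProdCLM.symm.contDiff.comp_contDiffOn
      (hv.comp equivRealProdCLM.contDiff.contDiffOn (mapsTo_preimage _ _))⟩

theorem hasFDerivAt (hu : IsCylinderFlow A v U S u)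
    (hp : toPlane p ∈ equivRealProdCLM ⁻¹' U ∪ equivRealProdCLM ⁻¹' S) :
    HasFDerivAt u (ofPlane.comp ((fderiv ℝ (equivRealProdCLM.symm ∘ v ∘ equivRealProdCLM)
      (toPlane p)).comp toPlane) + A) p := by
  obtain ⟨W, hW, hUW, hw⟩ := hu.contDiffOn_comp
  have hw' := ((hw.contDiffAt (hW.mem_nhds (hUW hp))).differentiableAt one_ne_zero).hasFDerivAt
  rw [funext hu.eq_ofPlane_add]
  exact (ofPlane.hasFDerivAt.comp p (hw'.comp p toPlane.hasFDerivAt)).add A.hasFDerivAt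

theorem differentiableAt_ofPlane (hu : IsCylinderFlow A v U S u)
    (hz : z ∈ equivRealProdCLM ⁻¹' U ∪ equivRealProdCLM ⁻¹' S) :
    DifferentiableAt ℝ u (ofPlane z) :=
  (hu.hasFDerivAt (by rwa [toPlane_ofPlane])).differentiableAt

theorem pder_two_two (hu : IsCylinderFlow A v U S u)
    (hp : toPlane p ∈ equivRealProdCLM ⁻¹' U ∪ equivRealProdCLM ⁻¹' S) :
    pder u 2 2 p = A (e3 2) 2 := by
  rw [pder, (hu.hasFDerivAt hp).fderiv]
  simp [toPlane_e3_two]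

theorem isCurveVelocity_toPlane (hu : IsCylinderFlow A v U S u)
    (hp : toPlane p ∈ equivRealProdCLM ⁻¹' S) :
    IsCurveVelocity (equivRealProdCLM ⁻¹' S) (toPlane p) (toPlane (u p)) := by
  simp only [mem_preimage, equivRealProdCLM_toPlane] at hp
  refine IsCurveVelocity.map (hu.tangent p hp) toPlane fun x hx => ?_
  rwa [mem_preimage, equivRealProdCLM_toPlane]

theorem isIrrotationalFlow (hu : IsCylinderFlow A v U S u) :
    IsIrrotationalFlow (equivRealProdCLM ⁻¹' U) (equivRealProdCLM ⁻¹' S) (-A (e3 2) 2)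
      (planarField u) where
  contDiffOn := by
    obtain ⟨W, hW, hUW, hw⟩ := hu.contDiffOn_comp
    refine ⟨W, hW, hUW, ?_⟩
    rw [funext hu.planarField_eq]
    exact hw.add (toPlane.comp (A.comp ofPlane)).contDiff.contDiffOn
  isSymmetric z hz := isSymmetric_fderiv_planarField (hu.differentiableAt_ofPlane (Or.inl hz))
    (hu.curl_eq_zero _ (by rwa [← equivRealProdCLM_toPlane, toPlane_ofPlane]))
  divergence_eq z hz := by
    rw [divergence_planarField (hu.differentiableAt_ofPlane (Or.inl hz)),
      hu.div_eq_zero _ (by rwa [← equivRealProdCLM_toPlane, toPlane_ofPlane]),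
      hu.pder_two_two (by rw [toPlane_ofPlane]; exact Or.inl hz), zero_sub]
  tangent z hz := by
    simpa using! hu.isCurveVelocity_toPlane (p := ofPlane z) (by rwa [toPlane_ofPlane])

/-- Raising the base point changes the horizontal part of `u` by a multiple of that of `A (e3 2)`,
which is therefore tangent to the curve everywhere. -/
theorem toPlane_apply_e3_two_eq_zero {T : ℝ} {Γ : ℝ → ℂ} (hΓ : IsRegularClosedCurve T Γ)
    (hu : IsCylinderFlow A v U S u) (hS : equivRealProdCLM ⁻¹' S = range Γ) :
    toPlane (A (e3 2)) = 0 := by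
  refine hΓ.eq_zero_of_forall_mem_span_deriv fun t => ?_
  have hspan (s : ℝ) : planarField u (Γ t) + s • toPlane (A (e3 2)) ∈ ℝ ∙ deriv Γ t := by
    have hs : toPlane (ofPlane (Γ t) + s • e3 2) = Γ t := by simp [toPlane_e3_two]
    have hvel := hu.isCurveVelocity_toPlane (p := ofPlane (Γ t) + s • e3 2)
      (by rw [hs, hS]; exact mem_range_self t)
    rw [hs, hS] at hvel
    convert hΓ.mem_span_deriv hvel using 1
    rw [hu.planarField_eq, hu.eq_ofPlane_add, hs]
    simp [add_assoc]
  simpa using sub_mem (hspan 1) (hspan 0)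

theorem fderiv_planarField_add_apply_sub (hum : IsCylinderFlow A vm Um S um)
    (hup : IsCylinderFlow A vp Up S up) (hz : z ∈ equivRealProdCLM ⁻¹' S)
    (hker : (fderiv ℝ up (ofPlane z) + fderiv ℝ um (ofPlane z))
      (up (ofPlane z) - um (ofPlane z)) = 0) :
    (fderiv ℝ (planarField up) z + fderiv ℝ (planarField um) z)
      (planarField up z - planarField um z) = 0 := by
  have hjump : ofPlane (planarField up z - planarField um z) =
      up (ofPlane z) - um (ofPlane z) := by
    rw [hup.planarField_eq, hum.planarField_eq, hup.eq_ofPlane_add, hum.eq_ofPlane_add]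
    simp
  rw [(hasFDerivAt_planarField (hup.differentiableAt_ofPlane (Or.inr hz))).fderiv,
    (hasFDerivAt_planarField (hum.differentiableAt_ofPlane (Or.inr hz))).fderiv]
  simpa [hjump] using congrArg toPlane hker

theorem apply_eq_neg (hu : IsCylinderFlow A v U S u)
    (h0 : EqOn (planarField u) 0 (equivRealProdCLM ⁻¹' U)) {x : ℝ × ℝ} (hx : x ∈ U) :
    v x = -equivRealProdCLM (toPlane (A (ofPlane (equivRealProdCLM.symm x)))) := by
  have hz := h0 (show equivRealProdCLM.symm x ∈ equivRealProdCLM ⁻¹' U by simpa using hx)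
  rw [hu.planarField_eq, Pi.zero_apply, ContinuousLinearEquiv.apply_symm_apply] at hz
  rw [← map_neg, ← eq_neg_of_add_eq_zero_left hz, ContinuousLinearEquiv.apply_symm_apply]

theorem eq_zero_of_jump_mem_ker {T : ℝ} {γ : ℝ → ℝ × ℝ} {Ω : Set (ℝ × ℝ)}
    (hΩ : IsRegularJordanDomain T γ Ω) (hA : (A : E3 →ₗ[ℝ] E3).IsSymmetric)
    (hum : IsCylinderFlow A vm Ω (range γ) um)
    (hup : IsCylinderFlow A vp (Ω ∪ range γ)ᶜ (range γ) up)
    (hbound : ∃ M, ∀ x ∈ (Ω ∪ range γ)ᶜ, ‖vp x‖ ≤ M)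
    (hker : ∀ p ∈ {p : E3 | (p 0, p 1) ∈ range γ},
      (fderiv ℝ up p + fderiv ℝ um p) (up p - um p) = 0) :
    A = 0 ∧ (∀ x ∈ Ω, vm x = 0) ∧ ∀ x ∈ (Ω ∪ range γ)ᶜ, vp x = 0 := by
  have hΩ' := hΩ.preimage equivRealProdCLM
  have hrange : equivRealProdCLM ⁻¹' range γ = range (equivRealProdCLM.symm ∘ γ) := by
    rw [range_comp, equivRealProdCLM.image_symm_eq_preimage]
  have hVm := hum.isIrrotationalFlow
  have hVp := hup.isIrrotationalFlow
  rw [preimage_compl, preimage_union, hrange, ← hΩ'.closure_eq] at hVp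
  rw [hrange] at hVm
  obtain ⟨hτ, hVm0, hVp0⟩ := hΩ'.eqOn_zero_of_jump_mem_ker hVm hVp fun z hz =>
    hum.fderiv_planarField_add_apply_sub hup (hrange ▸ hz) <| hker _ <| by
      rw [← hrange] at hz
      rwa [mem_ofPred_eq, ← equivRealProdCLM_toPlane, toPlane_ofPlane]
  rw [hΩ'.closure_eq, ← hrange, ← preimage_union, ← preimage_compl] at hVp0
  have hvert : A (e3 2) = 0 := by
    rw [← ofPlane_toPlane_add_smul_e3 (A (e3 2)),
      hum.toPlane_apply_e3_two_eq_zero hΩ'.toIsRegularClosedCurve hrange, neg_eq_zero.1 hτ]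
    simp
  obtain ⟨M, hM⟩ := hbound
  have hplane := eq_zero_of_forall_norm_le (hΩ.isBounded.closure) (M := M)
    (L := (equivRealProdCLM : ℂ →L[ℝ] ℝ × ℝ).comp (toPlane.comp (A.comp
      (ofPlane.comp (equivRealProdCLM.symm : ℝ × ℝ →L[ℝ] ℂ))))) fun x hx => by
    rw [hΩ.closure_eq] at hx
    simpa [hup.apply_eq_neg hVp0 hx] using hM x hx
  obtain rfl : A = 0 := eq_zero_of_isSymmetric_of_compress_eq_zero hA (fun z => by
    have hz := congr($hplane (equivRealProdCLM z))
    simp only [ContinuousLinearMap.comp_apply, ContinuousLinearEquiv.coe_coe,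
      ContinuousLinearEquiv.symm_apply_apply, _root_.zero_apply] at hz
    exact equivRealProdCLM.map_eq_zero_iff.1 hz) hvert
  refine ⟨rfl, fun x hx => ?_, fun x hx => ?_⟩
  · rw [hum.apply_eq_neg hVm0 hx, _root_.zero_apply, map_zero, map_zero, neg_zero]
  · rw [hup.apply_eq_neg hVp0 hx, _root_.zero_apply, map_zero, map_zero, neg_zero]

end IsCylinderFlow

end Cylinder

theorem statement11_general {T : ℝ} {γ : ℝ → ℝ × ℝ} {Ω : Set (ℝ × ℝ)}
    (hΩ : IsRegularJordanDomain T γ Ω) {vm vp : ℝ × ℝ → ℝ × ℝ}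
    (hvpB : ∃ M, ∀ x ∈ (Ω ∪ range γ)ᶜ, ‖vp x‖ ≤ M)
    (hvmC1 : ∃ W, IsOpen W ∧ Ω ∪ range γ ⊆ W ∧ ContDiffOn ℝ 1 vm W)
    (hvpC1 : ∃ W, IsOpen W ∧ (Ω ∪ range γ)ᶜ ∪ range γ ⊆ W ∧ ContDiffOn ℝ 1 vp W)
    {q : E3 → ℝ} {Q : Matrix (Fin 3) (Fin 3) ℝ}
    (hq : ∀ p : E3, q p = ∑ i, ∑ j, Q i j * p i * p j) {um up : E3 → E3}
    (hum : ∀ p : E3, um p = mk3 (vm (p 0, p 1)).1 (vm (p 0, p 1)).2 0 + grad3 q p)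
    (hup : ∀ p : E3, up p = mk3 (vp (p 0, p 1)).1 (vp (p 0, p 1)).2 0 + grad3 q p)
    (hdivm : ∀ p : E3, (p 0, p 1) ∈ Ω → div3 um p = 0)
    (hdivp : ∀ p : E3, (p 0, p 1) ∈ (Ω ∪ range γ)ᶜ → div3 up p = 0)
    (hcurlm : ∀ p : E3, (p 0, p 1) ∈ Ω → curl3 um p = 0)
    (hcurlp : ∀ p : E3, (p 0, p 1) ∈ (Ω ∪ range γ)ᶜ → curl3 up p = 0)
    (htm : ∀ p ∈ {p : E3 | (p 0, p 1) ∈ range γ},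
      IsTangentAt {p : E3 | (p 0, p 1) ∈ range γ} p (um p))
    (htp : ∀ p ∈ {p : E3 | (p 0, p 1) ∈ range γ},
      IsTangentAt {p : E3 | (p 0, p 1) ∈ range γ} p (up p))
    (hker : ∀ p ∈ {p : E3 | (p 0, p 1) ∈ range γ},
      (fderiv ℝ up p + fderiv ℝ um p) (up p - um p) = 0) :
    (∀ x ∈ (Ω ∪ range γ)ᶜ, vp x = 0) ∧ (∀ x ∈ Ω, vm x = 0) ∧ ∀ p : E3, q p = 0 := by
  let B : E3 →L[ℝ] E3 := Matrix.toEuclideanCLM (𝕜 := ℝ) Q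
  obtain rfl : q = fun p => ⟪p, B p⟫ := funext fun p => by
    rw [hq, Matrix.inner_toEuclideanCLM]
    simp only [dotProduct, Matrix.mulVec, Finset.mul_sum]
    exact Finset.sum_congr rfl fun i _ => Finset.sum_congr rfl fun j _ => by ring
  have hA : ((B + B.adjoint : E3 →L[ℝ] E3) : E3 →ₗ[ℝ] E3).IsSymmetric :=
    (IsSelfAdjoint.add_star_self B).isSymmetric
  simp only [grad3_inner_apply] at hum hup
  obtain ⟨hA0, hvm, hvp⟩ := IsCylinderFlow.eq_zero_of_jump_mem_ker hΩ hA
    ⟨hum, hvmC1, hdivm, hcurlm, htm⟩ ⟨hup, hvpC1, hdivp, hcurlp, htp⟩ hvpB hker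
  refine ⟨hvp, hvm, fun p => ?_⟩
  have hp : ⟪(B + B.adjoint) p, p⟫ = 0 := by rw [hA0]; exact inner_zero_left p
  rw [_root_.add_apply, inner_add_left, ContinuousLinearMap.adjoint_inner_left,
    real_inner_comm] at hp
  linarith

/-- Let `σ ⊂ ℝ²` be a smooth simple closed curve, `Ωm` the bounded simply
connected domain it encloses, `Ωp` the exterior, `S = σ × ℝ ⊂ ℝ³` the cylinder over `σ`.
Let `vm : Ωm → ℝ²`, `vp : Ωp → ℝ²` be bounded vector fields, C¹ up to `σ`, and
`q : ℝ³ → ℝ` a harmonic homogeneous quadratic polynomial such that the three-dimensional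
fields `u± = (v±, 0) + ∇q` are divergence-free, curl-free on `Ω± × ℝ` and tangent to `S`,
and such that at every point of `S` the vector `u₊ − u₋` lies in the kernel of
`Du₊ + Du₋`.  Then `vp ≡ 0`, `vm ≡ 0` and `q ≡ 0`. -/
theorem statement11
    (γ : ℝ → ℝ × ℝ)
    (hγsmooth : ContDiff ℝ (⊤ : ℕ∞) γ)
    (hγper : ∀ t, γ (t + 2 * Real.pi) = γ t)
    (hγinj : Set.InjOn γ (Set.Ico 0 (2 * Real.pi)))
    (hγreg : ∀ t, deriv γ t ≠ 0)
    (σset : Set (ℝ × ℝ)) (hσ : σset = Set.range γ)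
    (Ωm Ωp : Set (ℝ × ℝ))
    (hΩmo : IsOpen Ωm) (hΩmb : Bornology.IsBounded Ωm)
    (hΩmsc : SimplyConnectedSpace Ωm)
    (hfr : frontier Ωm = σset)
    (hΩp : Ωp = (Ωm ∪ σset)ᶜ)
    (S : Set E3) (hS : S = {p : E3 | (p 0, p 1) ∈ σset})
    (vm vp : ℝ × ℝ → ℝ × ℝ)
    (hvmB : ∃ M, ∀ x ∈ Ωm, ‖vm x‖ ≤ M)
    (hvpB : ∃ M, ∀ x ∈ Ωp, ‖vp x‖ ≤ M)
    (hvmC1 : ∃ W, IsOpen W ∧ Ωm ∪ σset ⊆ W ∧ ContDiffOn ℝ 1 vm W)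
    (hvpC1 : ∃ W, IsOpen W ∧ Ωp ∪ σset ⊆ W ∧ ContDiffOn ℝ 1 vp W)
    (q : E3 → ℝ)
    (hq : ∃ Q : Matrix (Fin 3) (Fin 3) ℝ, Q.IsSymm ∧ Matrix.trace Q = 0 ∧
      ∀ p : E3, q p = ∑ i, ∑ j, Q i j * p i * p j)
    (um up : E3 → E3)
    (hum : ∀ p : E3, um p = mk3 (vm (p 0, p 1)).1 (vm (p 0, p 1)).2 0 + grad3 q p)
    (hup : ∀ p : E3, up p = mk3 (vp (p 0, p 1)).1 (vp (p 0, p 1)).2 0 + grad3 q p)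
    -- (b) divergence-free, curl-free, tangent to the cylinder
    (hdivm : ∀ p : E3, (p 0, p 1) ∈ Ωm → div3 um p = 0)
    (hdivp : ∀ p : E3, (p 0, p 1) ∈ Ωp → div3 up p = 0)
    (hcurlm : ∀ p : E3, (p 0, p 1) ∈ Ωm → curl3 um p = 0)
    (hcurlp : ∀ p : E3, (p 0, p 1) ∈ Ωp → curl3 up p = 0)
    (htm : ∀ p ∈ S, IsTangentAt S p (um p))
    (htp : ∀ p ∈ S, IsTangentAt S p (up p))
    -- (c) kernel condition on the cylinder
    (hker : ∀ p ∈ S, (fderiv ℝ up p + fderiv ℝ um p) (up p - um p) = 0) :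
    (∀ x ∈ Ωp, vp x = 0) ∧ (∀ x ∈ Ωm, vm x = 0) ∧ (∀ p : E3, q p = 0) := by
  subst hσ hΩp hS
  obtain ⟨Q, -, -, hq⟩ := hq
  exact statement11_general ⟨⟨Real.two_pi_pos, hγper, hγinj,
    hγsmooth.differentiable (by simp), hγreg⟩, hΩmo, hΩmb, hΩmsc, hfr⟩
    hvpB hvmC1 hvpC1 hq hum hup hdivm hdivp hcurlm hcurlp htm htp hker
end
end

section
/- Let 0 < a < b < c and let X = (X₁, X₂, X₃) be a random vector with the standard Gaussian law on ℝ³ (density (2π)^{−3/2} e^{−|u|²/2}). Then the tail of the quadratic form a X₁² + b X₂² + c X₃² satisfies lim_{Γ→∞} √Γ · e^{Γ/c} · ℙ( a X₁² + b X₂² + c X₃² ≥ 2Γ ) = c^{3/2} / √( π (c − a)(c − b) ). In particular the probability tail decays like a pure exponential e^{−Γ/c} with pre-exponential factor proportional to 1/√Γ. -/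
noncomputable section

open MeasureTheory Filter Set
open scoped RealInnerProductSpace Topology

/-!
Divide the form by its largest coefficient `c`, so that it reads `Q + Z ^ 2` with `Z` standard
Gaussian and independent of the combination `Q` of the squares of the other coordinates.
Conditionally on `Q`, the event `r ≤ Q + Z ^ 2` is the tail at `r - Q` of a chi-squared law with one
degree of freedom, and the Mills ratio makes that tail equivalent to
`√(2 / π) * exp (-(r - Q) / 2) / √r`. So `Q` only contributes the exponential tilt `exp (Q / 2)`,
whose mean is finite because the coefficients of `Q` are smaller than `1`. Two uniform bounds on the
chi-squared tail dominate the rescaled conditional probability by a constant times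
`exp (Q / 2) * (1 + √|Q|)`, and dominated convergence gives the limit `√(2 / π) * 𝔼[exp (Q / 2)]`,
in which the Gaussian integral turns each coefficient `b` of `Q` into a factor `1 / √(1 - b)`.
-/

open Real ProbabilityTheory

section MillsRatio

/-- The Mills ratio `(1 - Φ x) / φ x` of the standard Gaussian law, where `φ` is its density and
`Φ` its distribution function. It isolates the algebraic factor of the Gaussian tail. -/
def millsRatio (x : ℝ) : ℝ := (gaussianReal 0 1).real (Ici x) / gaussianPDFReal 0 1 x

lemma gaussianPDFReal_zero_one (x : ℝ) :
    gaussianPDFReal 0 1 x = (√(2 * π))⁻¹ * exp (-x ^ 2 / 2) := by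
  simp [gaussianPDFReal]

lemma millsRatio_eq_integral (x : ℝ) :
    millsRatio x = ∫ t in Ioi 0, exp (-(x * t) - t ^ 2 / 2) := by
  have hshift (t : ℝ) : gaussianPDFReal 0 1 (t + x) =
      gaussianPDFReal 0 1 x * exp (-(x * t) - t ^ 2 / 2) := by
    rw [gaussianPDFReal_zero_one, gaussianPDFReal_zero_one, mul_assoc, ← exp_add]
    ring_nf
  have htail : (gaussianReal 0 1).real (Ici x) =
      gaussianPDFReal 0 1 x * ∫ t in Ioi 0, exp (-(x * t) - t ^ 2 / 2) :=
    calc (gaussianReal 0 1).real (Ici x)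
      _ = ∫ z in Ioi x, gaussianPDFReal 0 1 z := by
        rw [measureReal_def, gaussianReal_apply_eq_integral 0 one_ne_zero, ENNReal.toReal_ofReal
          (integral_nonneg (gaussianPDFReal_nonneg 0 1)), integral_Ici_eq_integral_Ioi]
      _ = ∫ t in Ioi 0, gaussianPDFReal 0 1 (t + x) := by
        have := (measurePreserving_add_right volume x).setIntegral_preimage_emb
          (measurableEmbedding_addRight x) (gaussianPDFReal 0 1) (Ioi x)
        simpa using this.symm
      _ = _ := by simp_rw [hshift, integral_const_mul]
  rw [millsRatio, htail, mul_div_cancel_left₀ _ (gaussianPDFReal_pos 0 1 x one_ne_zero).ne']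

lemma millsRatio_le_sqrt_pi_div_two {x : ℝ} (hx : 0 ≤ x) : millsRatio x ≤ √(π / 2) :=
  calc millsRatio x
    _ = ∫ t in Ioi 0, exp (-(x * t) - t ^ 2 / 2) := millsRatio_eq_integral x
    _ ≤ ∫ t in Ioi (0 : ℝ), exp (-(1 / 2) * t ^ 2) := by
      refine integral_mono_of_nonneg (ae_of_all _ fun t ↦ (exp_pos _).le)
        (integrable_exp_neg_mul_sq one_half_pos).integrableOn ?_
      filter_upwards [ae_restrict_mem measurableSet_Ioi] with t (ht : 0 < t)
      rw [exp_le_exp]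
      linarith [mul_nonneg hx ht.le]
    _ = √(π / 2) := by
      rw [integral_gaussian_Ioi, div_eq_iff two_ne_zero, show π / (1 / 2) = π / 2 * 2 ^ 2 by ring,
        sqrt_mul (by positivity), sqrt_sq two_pos.le]

lemma mul_millsRatio_eq_integral {x : ℝ} (hx : 0 < x) :
    x * millsRatio x = ∫ w in Ioi 0, exp (-w - (w / x) ^ 2 / 2) := by
  have hscale := integral_comp_mul_left_Ioi' (fun w ↦ exp (-w - (w / x) ^ 2 / 2)) 0 hx
  simpa only [mul_div_cancel_left₀ _ hx.ne', mul_zero, smul_eq_mul, ← millsRatio_eq_integral]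
    using hscale

lemma integrableOn_exp_neg_Ioi_zero : IntegrableOn (fun w : ℝ ↦ exp (-w)) (Ioi 0) := by
  simpa using exp_neg_integrableOn_Ioi 0 one_pos

lemma mul_millsRatio_le_one {x : ℝ} (hx : 0 ≤ x) : x * millsRatio x ≤ 1 := by
  obtain rfl | hx := hx.eq_or_lt
  · simp
  rw [mul_millsRatio_eq_integral hx, ← integral_exp_neg_Ioi_zero]
  refine integral_mono_of_nonneg (ae_of_all _ fun w ↦ (exp_pos _).le)
    integrableOn_exp_neg_Ioi_zero (ae_of_all _ fun w ↦ exp_le_exp.mpr ?_)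
  exact sub_le_self _ (by positivity)

lemma tendsto_mul_millsRatio_atTop : Tendsto (fun x ↦ x * millsRatio x) atTop (𝓝 1) := by
  have hlim : Tendsto (fun x : ℝ ↦ ∫ w in Ioi 0, exp (-w - (w / x) ^ 2 / 2)) atTop
      (𝓝 (∫ w in Ioi (0 : ℝ), exp (-w))) := by
    refine tendsto_integral_filter_of_dominated_convergence (fun w ↦ exp (-w))
      (Eventually.of_forall fun x ↦ by fun_prop)
      (Eventually.of_forall fun x ↦ ae_of_all _ fun w ↦ ?_)
      integrableOn_exp_neg_Ioi_zero (ae_of_all _ fun w ↦ ?_)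
    · rw [norm_of_nonneg (exp_pos _).le, exp_le_exp]
      exact sub_le_self _ (by positivity)
    · have hdiv : Tendsto (fun x : ℝ ↦ w / x) atTop (𝓝 0) :=
        tendsto_const_nhds.div_atTop tendsto_id
      simpa using (((hdiv.pow 2).div_const 2).const_sub (-w)).rexp
  rw [integral_exp_neg_Ioi_zero] at hlim
  refine hlim.congr' ?_
  filter_upwards [eventually_gt_atTop 0] with x hx
  exact (mul_millsRatio_eq_integral hx).symm

end MillsRatio

section SquareTail

/-- The tail function `s ↦ ℙ(Z² ≥ s)` of the chi-squared law with one degree of freedom, for `Z`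
standard Gaussian. -/
def gaussianSqTail (s : ℝ) : ℝ := (gaussianReal 0 1).real {z | s ≤ z ^ 2}

lemma gaussianSqTail_nonneg (s : ℝ) : 0 ≤ gaussianSqTail s := measureReal_nonneg

lemma antitone_gaussianSqTail : Antitone gaussianSqTail :=
  fun _ _ hst ↦ measureReal_mono fun _ hz ↦ hst.trans hz

lemma exp_mul_gaussianSqTail {s : ℝ} (hs : 0 < s) :
    exp (s / 2) * gaussianSqTail s = √(2 / π) * millsRatio √s := by
  have hset : {z : ℝ | s ≤ z ^ 2} = Iic (-√s) ∪ Ici √s := by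
    ext z
    rw [mem_ofPred_eq, ← sqrt_le_sqrt_iff (sq_nonneg z), sqrt_sq_eq_abs, le_abs']
    rfl
  have hdisj : Disjoint (Iic (-√s)) (Ici √s) :=
    Iic_disjoint_Ici.mpr (by linarith [sqrt_pos.mpr hs])
  have hsymm : (gaussianReal 0 1).real (Iic (-√s)) = (gaussianReal 0 1).real (Ici √s) := by
    conv_lhs => rw [← neg_zero, ← gaussianReal_map_neg]
    rw [map_measureReal_apply measurable_neg measurableSet_Iic]
    simp
  have hpdf : exp (s / 2) * gaussianPDFReal 0 1 √s = (√(2 * π))⁻¹ := by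
    rw [gaussianPDFReal_zero_one, sq_sqrt hs.le, mul_left_comm, ← exp_add]
    simp [neg_div]
  have hmills : (gaussianReal 0 1).real (Ici √s) = gaussianPDFReal 0 1 √s * millsRatio √s :=
    (mul_div_cancel₀ _ (gaussianPDFReal_pos 0 1 _ one_ne_zero).ne').symm
  have hconst : 2 * (√(2 * π))⁻¹ = √(2 / π) := by
    rw [sqrt_mul two_pos.le, sqrt_div two_pos.le]
    field_simp
    exact (sq_sqrt two_pos.le).symm
  rw [gaussianSqTail, hset, measureReal_union hdisj measurableSet_Ici, hsymm, hmills, ← hconst,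
    ← hpdf]
  ring

lemma exp_mul_gaussianSqTail_le_one (s : ℝ) : exp (s / 2) * gaussianSqTail s ≤ 1 := by
  obtain hs | hs := le_or_gt s 0
  · exact mul_le_one₀ (exp_le_one_iff.mpr (by linarith)) (gaussianSqTail_nonneg s)
      measureReal_le_one
  · calc exp (s / 2) * gaussianSqTail s
      _ = √(2 / π) * millsRatio √s := exp_mul_gaussianSqTail hs
      _ ≤ √(2 / π) * √(π / 2) := by gcongr; exact millsRatio_le_sqrt_pi_div_two (sqrt_nonneg s)
      _ = 1 := by rw [← sqrt_mul (by positivity), div_mul_div_cancel₀ pi_ne_zero]; simp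

lemma sqrt_mul_exp_mul_gaussianSqTail_le (s : ℝ) :
    √s * (exp (s / 2) * gaussianSqTail s) ≤ √(2 / π) := by
  obtain hs | hs := le_or_gt s 0
  · rw [sqrt_eq_zero_of_nonpos hs, zero_mul]
    exact sqrt_nonneg _
  · rw [exp_mul_gaussianSqTail hs, mul_left_comm]
    exact mul_le_of_le_one_right (sqrt_nonneg _) (mul_millsRatio_le_one (sqrt_nonneg s))

lemma tendsto_sqrt_mul_exp_mul_gaussianSqTail :
    Tendsto (fun s ↦ √s * (exp (s / 2) * gaussianSqTail s)) atTop (𝓝 √(2 / π)) := by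
  have hlim := (tendsto_mul_millsRatio_atTop.comp tendsto_sqrt_atTop).const_mul √(2 / π)
  rw [mul_one] at hlim
  refine hlim.congr' ?_
  filter_upwards [eventually_gt_atTop 0] with s hs
  rw [exp_mul_gaussianSqTail hs, Function.comp_apply]
  ring

lemma sqrt_le_sqrt_sub_add_sqrt_abs (r q : ℝ) : √r ≤ √(r - q) + √|q| := by
  have hsub : r - q ≤ √(r - q) ^ 2 := (le_max_left _ _).trans_eq sq_sqrt'.symm
  have habs : q ≤ √|q| ^ 2 := (le_abs_self q).trans_eq (sq_sqrt (abs_nonneg q)).symm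
  rw [sqrt_le_left (by positivity), add_sq]
  linarith [mul_nonneg (sqrt_nonneg (r - q)) (sqrt_nonneg |q|)]

lemma sqrt_mul_exp_mul_gaussianSqTail_sub_le (r q : ℝ) :
    √r * (exp ((r - q) / 2) * gaussianSqTail (r - q)) ≤ √(2 / π) + √|q| := by
  set T := exp ((r - q) / 2) * gaussianSqTail (r - q)
  have hT : 0 ≤ T := mul_nonneg (exp_pos _).le (gaussianSqTail_nonneg _)
  calc √r * T
    _ ≤ (√(r - q) + √|q|) * T := by gcongr; exact sqrt_le_sqrt_sub_add_sqrt_abs r q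
    _ = √(r - q) * T + √|q| * T := add_mul ..
    _ ≤ √(2 / π) + √|q| := add_le_add (sqrt_mul_exp_mul_gaussianSqTail_le _)
      (mul_le_of_le_one_right (sqrt_nonneg _) (exp_mul_gaussianSqTail_le_one _))

lemma tendsto_sqrt_mul_exp_mul_gaussianSqTail_sub (q : ℝ) :
    Tendsto (fun r ↦ √r * (exp ((r - q) / 2) * gaussianSqTail (r - q))) atTop
      (𝓝 √(2 / π)) := by
  have hsub : Tendsto (fun r : ℝ ↦ r - q) atTop atTop :=
    tendsto_atTop_add_const_right _ _ tendsto_id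
  have hratio : Tendsto (fun r : ℝ ↦ √(1 + q / (r - q))) atTop (𝓝 1) := by
    simpa using ((tendsto_const_nhds.div_atTop hsub).const_add 1).sqrt
  have hlim := hratio.mul (tendsto_sqrt_mul_exp_mul_gaussianSqTail.comp hsub)
  rw [one_mul] at hlim
  refine hlim.congr' ?_
  filter_upwards [hsub.eventually_gt_atTop 0] with r hr
  rw [Function.comp_apply, ← mul_assoc, ← sqrt_mul' _ hr.le, add_mul, div_mul_cancel₀ _ hr.ne',
    one_mul, sub_add_cancel]

end SquareTail

section IndependentPerturbation

variable {Ω : Type*} [MeasurableSpace Ω] {P : Measure Ω} {Q Z : Ω → ℝ}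

lemma measureReal_le_add_sq_eq_integral (hQ : AEMeasurable Q P)
    (hZ : HasLaw Z (gaussianReal 0 1) P) (hQZ : IndepFun Q Z P) (r : ℝ) :
    P.real {ω | r ≤ Q ω + Z ω ^ 2} = ∫ ω, gaussianSqTail (r - Q ω) ∂P := by
  have := hZ.isProbabilityMeasure
  have hset : MeasurableSet {p : ℝ × ℝ | r ≤ p.1 + p.2 ^ 2} :=
    measurableSet_le measurable_const (by fun_prop)
  have hlaw : HasLaw (fun ω ↦ (Q ω, Z ω)) ((P.map Q).prod (gaussianReal 0 1)) P :=
    hQZ.hasLaw_prod ⟨hQ, rfl⟩ hZ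
  have hsection (q : ℝ) : (gaussianReal 0 1).real (Prod.mk q ⁻¹' {p | r ≤ p.1 + p.2 ^ 2}) =
      gaussianSqTail (r - q) := by
    simp only [gaussianSqTail, preimage_ofPred_eq, sub_le_iff_le_add']
  have hmeas : AEStronglyMeasurable (fun q ↦ gaussianSqTail (r - q)) (P.map Q) :=
    have := antitone_gaussianSqTail.measurable
    Measurable.aestronglyMeasurable (by fun_prop)
  rw [hlaw.measureReal_eq hset, measureReal_def, Measure.prod_apply hset,
    ← integral_toReal (measurable_measure_prodMk_left hset).aemeasurable
      (ae_of_all _ fun _ ↦ measure_lt_top _ _)]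
  simp only [← measureReal_def, hsection]
  exact integral_map hQ hmeas

theorem tendsto_sqrt_mul_exp_mul_measureReal_le_add_sq (hZ : HasLaw Z (gaussianReal 0 1) P)
    (hQZ : IndepFun Q Z P) (hQ : 1 / 2 ∈ interior (integrableExpSet Q P)) :
    Tendsto (fun r ↦ √r * exp (r / 2) * P.real {ω | r ≤ Q ω + Z ω ^ 2}) atTop
      (𝓝 (√(2 / π) * mgf Q P (1 / 2))) := by
  have hQm : AEMeasurable Q P := aemeasurable_of_mem_interior_integrableExpSet hQ
  have hdom : Integrable (fun ω ↦ exp (1 / 2 * Q ω) * (√(2 / π) + √|Q ω|)) P := by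
    have hexp : Integrable (fun ω ↦ exp (1 / 2 * Q ω)) P :=
      integrable_of_mem_integrableExpSet (interior_subset hQ)
    have hsqrt := integrable_rpow_abs_mul_exp_of_mem_interior_integrableExpSet hQ one_half_pos.le
    refine ((hexp.const_mul √(2 / π)).add hsqrt).congr (ae_of_all _ fun ω ↦ ?_)
    simp only [Pi.add_apply, sqrt_eq_rpow]
    ring
  have hlim : Tendsto (fun r ↦ ∫ ω, exp (1 / 2 * Q ω) *
      (√r * (exp ((r - Q ω) / 2) * gaussianSqTail (r - Q ω))) ∂P) atTop
      (𝓝 (∫ ω, exp (1 / 2 * Q ω) * √(2 / π) ∂P)) := by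
    refine tendsto_integral_filter_of_dominated_convergence _ (Eventually.of_forall fun r ↦ ?_)
      (Eventually.of_forall fun r ↦ ae_of_all _ fun ω ↦ ?_) hdom
      (ae_of_all _ fun ω ↦ (tendsto_sqrt_mul_exp_mul_gaussianSqTail_sub (Q ω)).const_mul _)
    · have := antitone_gaussianSqTail.measurable
      exact AEMeasurable.aestronglyMeasurable (by fun_prop)
    · have := gaussianSqTail_nonneg (r - Q ω)
      rw [norm_of_nonneg (by positivity)]
      gcongr
      exact sqrt_mul_exp_mul_gaussianSqTail_sub_le r (Q ω)
  rw [integral_mul_const, mul_comm] at hlim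
  refine hlim.congr fun r ↦ ?_
  rw [measureReal_le_add_sq_eq_integral hQm hZ hQZ, ← integral_const_mul]
  congr 1 with ω
  have htilt : exp (1 / 2 * Q ω) * exp ((r - Q ω) / 2) = exp (r / 2) := by
    rw [← exp_add]
    ring_nf
  rw [← htilt]
  ring

end IndependentPerturbation

section GaussianQuadraticForm

-- For `1 / 2 ≤ s` both sides are `0` by convention: the integral diverges and the square root
-- vanishes.
lemma integral_exp_mul_sq_gaussianReal (s : ℝ) :
    ∫ x, exp (s * x ^ 2) ∂gaussianReal 0 1 = (√(1 - 2 * s))⁻¹ := by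
  have hpdf (x : ℝ) : gaussianPDFReal 0 1 x • exp (s * x ^ 2) =
      (√(2 * π))⁻¹ * exp (-(1 / 2 - s) * x ^ 2) := by
    rw [gaussianPDFReal_zero_one, smul_eq_mul, mul_assoc, ← exp_add]
    ring_nf
  simp only [integral_gaussianReal_eq_integral_smul one_ne_zero, hpdf, integral_const_mul,
    integral_gaussian]
  rw [← sqrt_inv, ← sqrt_mul (by positivity), ← sqrt_inv]
  congr 1
  field_simp

variable {Ω ι : Type*} [MeasurableSpace Ω] {P : Measure Ω}

lemma mgf_mul_sq {X : Ω → ℝ} (hX : HasLaw X (gaussianReal 0 1) P) (b t : ℝ) :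
    mgf (fun ω ↦ b * X ω ^ 2) P t = (√(1 - 2 * (b * t)))⁻¹ := by
  have hmeas : AEStronglyMeasurable (fun x ↦ exp (b * t * x ^ 2)) (gaussianReal 0 1) := by fun_prop
  rw [← integral_exp_mul_sq_gaussianReal, ← hX.integral_comp hmeas]
  simp only [mgf, Function.comp_def]
  ring_nf

variable {X : ι → Ω → ℝ}

lemma mgf_sum_mul_sq (hX : ∀ i, HasLaw (X i) (gaussianReal 0 1) P) (hind : iIndepFun X P)
    (b : ι → ℝ) (s : Finset ι) (t : ℝ) :
    mgf (fun ω ↦ ∑ i ∈ s, b i * X i ω ^ 2) P t = ∏ i ∈ s, (√(1 - 2 * (b i * t)))⁻¹ := by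
  have hmeas (i : ι) : AEMeasurable (X i) P := (hX i).aemeasurable
  have hind_sq : iIndepFun (fun i ω ↦ b i * X i ω ^ 2) P :=
    hind.comp (fun i x ↦ b i * x ^ 2) fun i ↦ by fun_prop
  have hsum := hind_sq.mgf_sum₀ (t := t) (by fun_prop) s
  simpa only [Finset.sum_fn, mgf_mul_sq (hX _)] using hsum

variable {s : Finset ι}

lemma mem_interior_integrableExpSet_sum_mul_sq (hX : ∀ i, HasLaw (X i) (gaussianReal 0 1) P)
    (hind : iIndepFun X P) {b : ι → ℝ} {t : ℝ} (hb : ∀ i ∈ s, 2 * (b i * t) < 1) :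
    t ∈ interior (integrableExpSet (fun ω ↦ ∑ i ∈ s, b i * X i ω ^ 2) P) := by
  have := hind.isProbabilityMeasure
  have hopen : IsOpen (⋂ i ∈ s, {u : ℝ | 2 * (b i * u) < 1}) :=
    isOpen_biInter_finset fun i _ ↦ isOpen_lt (by fun_prop) continuous_const
  -- `mgf` vanishes where the exponential moment is infinite, so integrability is its positivity.
  refine interior_maximal (fun u hu ↦ mgf_pos_iff.mp ?_) hopen (mem_iInter₂.mpr hb)
  rw [mgf_sum_mul_sq hX hind]
  exact Finset.prod_pos fun i hi ↦
    inv_pos.mpr (sqrt_pos.mpr (sub_pos.mpr (mem_iInter₂.mp hu i hi)))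

lemma indepFun_sum_mul_sq {m : ι} (hX : ∀ i, AEMeasurable (X i) P) (hind : iIndepFun X P)
    (hm : m ∉ s) (b : ι → ℝ) : IndepFun (fun ω ↦ ∑ i ∈ s, b i * X i ω ^ 2) (X m) P := by
  have hdisj : Disjoint s {m} := Finset.disjoint_singleton_right.mpr hm
  have hsum : Measurable fun x : s → ℝ ↦ ∑ i : s, b i * x i ^ 2 := by fun_prop
  have hcoord : Measurable fun x : ({m} : Finset ι) → ℝ ↦ x ⟨m, Finset.mem_singleton_self m⟩ :=
    measurable_pi_apply _
  have hcomp := (hind.indepFun_finset₀ s {m} hdisj hX).comp hsum hcoord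
  have hsubtype (ω : Ω) : ∑ i : s, b i * X i ω ^ 2 = ∑ i ∈ s, b i * X i ω ^ 2 :=
    Finset.sum_coe_sort s fun i ↦ b i * X i ω ^ 2
  simpa only [Function.comp_def, hsubtype] using hcomp

theorem tendsto_sqrt_mul_exp_mul_measureReal_le_sum_mul_sq_add_sq {m : ι} {b : ι → ℝ}
    (hX : ∀ i, HasLaw (X i) (gaussianReal 0 1) P) (hind : iIndepFun X P) (hm : m ∉ s)
    (hb : ∀ i ∈ s, b i < 1) :
    Tendsto (fun r ↦ √r * exp (r / 2) * P.real {ω | r ≤ ∑ i ∈ s, b i * X i ω ^ 2 + X m ω ^ 2})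
      atTop (𝓝 √(2 / π * ∏ i ∈ s, (1 - b i)⁻¹)) := by
  have hexp := mem_interior_integrableExpSet_sum_mul_sq (b := b) (t := 1 / 2) hX hind
    fun i hi ↦ by linarith [hb i hi]
  have hindep := indepFun_sum_mul_sq (fun i ↦ (hX i).aemeasurable) hind hm b
  have hmgf : mgf (fun ω ↦ ∑ i ∈ s, b i * X i ω ^ 2) P (1 / 2) = √(∏ i ∈ s, (1 - b i)⁻¹) := by
    rw [mgf_sum_mul_sq hX hind,
      sqrt_prod _ fun i hi ↦ inv_nonneg.mpr (sub_nonneg.mpr (hb i hi).le)]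
    refine Finset.prod_congr rfl fun i _ ↦ ?_
    rw [sqrt_inv]
    ring_nf
  rw [sqrt_mul (by positivity), ← hmgf]
  exact tendsto_sqrt_mul_exp_mul_measureReal_le_add_sq (hX m) hindep hexp

end GaussianQuadraticForm

section GaussianThreeSpace

lemma gaussianReal_prod_prod_eq_withDensity :
    (gaussianReal 0 1).prod ((gaussianReal 0 1).prod (gaussianReal 0 1)) =
      volume.withDensity fun u : ℝ × ℝ × ℝ ↦ ENNReal.ofReal
        ((2 * π) ^ (-(3 : ℝ) / 2) * exp (-(u.1 ^ 2 + u.2.1 ^ 2 + u.2.2 ^ 2) / 2)) := by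
  have hconst : (2 * π) ^ (-(3 : ℝ) / 2) = (√(2 * π))⁻¹ ^ 3 := by
    rw [sqrt_eq_rpow, ← rpow_neg (by positivity), ← rpow_natCast, ← rpow_mul (by positivity)]
    norm_num
  have hpdf (u : ℝ × ℝ × ℝ) :
      gaussianPDF 0 1 u.1 * (gaussianPDF 0 1 u.2.1 * gaussianPDF 0 1 u.2.2) = ENNReal.ofReal
        ((2 * π) ^ (-(3 : ℝ) / 2) * exp (-(u.1 ^ 2 + u.2.1 ^ 2 + u.2.2 ^ 2) / 2)) := by
    have hsplit : -(u.1 ^ 2 + u.2.1 ^ 2 + u.2.2 ^ 2) / 2 =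
        -u.1 ^ 2 / 2 + (-u.2.1 ^ 2 / 2 + -u.2.2 ^ 2 / 2) := by ring
    simp only [gaussianPDF, gaussianPDFReal_zero_one]
    rw [← ENNReal.ofReal_mul (by positivity), ← ENNReal.ofReal_mul (by positivity), hconst, hsplit,
      exp_add, exp_add]
    ring_nf
  rw [gaussianReal_of_var_ne_zero 0 one_ne_zero, prod_withDensity (by fun_prop) (by fun_prop),
    prod_withDensity (by fun_prop) (by fun_prop), ← Measure.volume_eq_prod,
    ← Measure.volume_eq_prod]
  simp only [hpdf]

lemma hasLaw_vecCons_prod_prod (μ : Measure ℝ) [SigmaFinite μ] :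
    HasLaw (fun u : ℝ × ℝ × ℝ ↦ ![u.1, u.2.1, u.2.2]) (Measure.pi fun _ ↦ μ)
      (μ.prod (μ.prod μ)) := by
  have hmeas : Measurable fun u : ℝ × ℝ × ℝ ↦ ![u.1, u.2.1, u.2.2] := by fun_prop
  refine ⟨hmeas.aemeasurable, (Measure.pi_eq fun s hs ↦ ?_).symm⟩
  have hpre : (fun u : ℝ × ℝ × ℝ ↦ ![u.1, u.2.1, u.2.2]) ⁻¹' univ.pi s =
      s 0 ×ˢ s 1 ×ˢ s 2 := by
    ext u
    simp [Fin.forall_fin_succ]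
  rw [Measure.map_apply hmeas (.univ_pi hs), hpre, Measure.prod_prod, Measure.prod_prod,
    Fin.prod_univ_three, mul_assoc]

lemma hasLaw_vecCons_withDensity :
    HasLaw (fun u : ℝ × ℝ × ℝ ↦ ![u.1, u.2.1, u.2.2]) (Measure.pi fun _ ↦ gaussianReal 0 1)
      (volume.withDensity fun u ↦ ENNReal.ofReal
        ((2 * π) ^ (-(3 : ℝ) / 2) * exp (-(u.1 ^ 2 + u.2.1 ^ 2 + u.2.2 ^ 2) / 2))) := by
  rw [← gaussianReal_prod_prod_eq_withDensity]
  exact hasLaw_vecCons_prod_prod _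

lemma sqrt_mul_prod_univ_erase_two (a b : ℝ) {c : ℝ} (hc : 0 ≤ c) :
    √(c / π * ∏ i ∈ Finset.univ.erase (2 : Fin 3), c / (c - ![a, b, c] i)) =
      c ^ ((3 : ℝ) / 2) / √(π * (c - a) * (c - b)) := by
  have herase : Finset.univ.erase (2 : Fin 3) = {0, 1} := by decide
  have hpow : √(c ^ 3) = c ^ ((3 : ℝ) / 2) := by
    rw [sqrt_eq_rpow, ← rpow_natCast, ← rpow_mul hc]
    norm_num
  calc √(c / π * ∏ i ∈ Finset.univ.erase (2 : Fin 3), c / (c - ![a, b, c] i))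
    _ = √(c / π * (c / (c - a) * (c / (c - b)))) := by
      rw [herase, Finset.prod_pair zero_ne_one]
      rfl
    _ = √(c ^ 3 / (π * (c - a) * (c - b))) := by
      rw [div_mul_div_comm, div_mul_div_comm, mul_assoc π, pow_three]
    _ = c ^ ((3 : ℝ) / 2) / √(π * (c - a) * (c - b)) := by rw [sqrt_div (by positivity), hpow]

end GaussianThreeSpace

theorem statement17_general {Ω ι : Type*} [MeasurableSpace Ω] [Fintype ι] [DecidableEq ι]
    {P : Measure Ω} {X : Ω → ι → ℝ} (hX : HasLaw X (Measure.pi fun _ ↦ gaussianReal 0 1) P)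
    (a : ι → ℝ) (m : ι) (hm : 0 < a m) (hmax : ∀ i ≠ m, a i < a m) :
    Tendsto (fun Γ ↦ √Γ * exp (Γ / a m) * P.real {ω | 2 * Γ ≤ ∑ i, a i * X ω i ^ 2}) atTop
      (𝓝 √(a m / π * ∏ i ∈ Finset.univ.erase m, a m / (a m - a i))) := by
  have := hX.isProbabilityMeasure
  have hmarginal (i : ι) : HasLaw (fun ω ↦ X ω i) (gaussianReal 0 1) P :=
    (measurePreserving_eval _ i).fun_comp_hasLaw hX
  have hind : iIndepFun (fun i ω ↦ X ω i) P := (iIndepFun_iff_hasLaw_pi_pi hmarginal).mpr hX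
  have hratio (i : ι) (hi : i ∈ Finset.univ.erase m) : a i / a m < 1 :=
    (div_lt_one hm).mpr (hmax i (Finset.ne_of_mem_erase hi))
  have hscale : Tendsto (fun Γ ↦ 2 * Γ / a m) atTop atTop :=
    (tendsto_id.const_mul_atTop two_pos).atTop_div_const hm
  have hlim := ((tendsto_sqrt_mul_exp_mul_measureReal_le_sum_mul_sq_add_sq hmarginal hind
    (Finset.notMem_erase m _) hratio).comp hscale).const_mul √(a m / 2)
  have hconst : √(a m / 2) * √(2 / π * ∏ i ∈ Finset.univ.erase m, (1 - a i / a m)⁻¹) =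
      √(a m / π * ∏ i ∈ Finset.univ.erase m, a m / (a m - a i)) := by
    rw [← sqrt_mul (by positivity), ← mul_assoc, div_mul_div_cancel₀ two_ne_zero]
    simp only [one_sub_div hm.ne', inv_div]
  have hform (ω : Ω) : (∑ i ∈ Finset.univ.erase m, a i / a m * X ω i ^ 2 + X ω m ^ 2) * a m =
      ∑ i, a i * X ω i ^ 2 := by
    rw [← Finset.sum_erase_add _ _ (Finset.mem_univ m), add_mul, Finset.sum_mul, mul_comm (a m)]
    simp only [mul_right_comm _ _ (a m), div_mul_cancel₀ _ hm.ne']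
  rw [hconst] at hlim
  refine hlim.congr fun Γ ↦ ?_
  have hsqrt : √(a m / 2) * √(2 * Γ / a m) = √Γ := by
    rw [← sqrt_mul (by positivity)]
    field_simp
  simp only [Function.comp_apply, div_le_iff₀ hm, hform]
  rw [← hsqrt, div_right_comm, mul_div_cancel_left₀ _ two_ne_zero]
  ring

/-- Let `0 < a < b < c` and let `μ` be the standard Gaussian measure on
`ℝ³` (density `(2π)^{−3/2} e^{−|u|²/2}`).  Then the tail of the quadratic form
`aX₁² + bX₂² + cX₃²` satisfies
`lim_{Γ→∞} √Γ · e^{Γ/c} · μ{aX₁² + bX₂² + cX₃² ≥ 2Γ} = c^{3/2}/√(π(c−a)(c−b))`. -/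
theorem statement17
    (a b c : ℝ) (ha : 0 < a) (hab : a < b) (hbc : b < c)
    (μ : Measure (ℝ × ℝ × ℝ))
    (hμ : μ = volume.withDensity (fun u : ℝ × ℝ × ℝ =>
      ENNReal.ofReal ((2 * Real.pi) ^ (-(3:ℝ) / 2) *
        Real.exp (-(u.1 ^ 2 + u.2.1 ^ 2 + u.2.2 ^ 2) / 2)))) :
    Filter.Tendsto
      (fun Γ : ℝ => Real.sqrt Γ * Real.exp (Γ / c) *
        (μ {u : ℝ × ℝ × ℝ | 2 * Γ ≤ a * u.1 ^ 2 + b * u.2.1 ^ 2 + c * u.2.2 ^ 2}).toReal)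
      Filter.atTop
      (𝓝 (c ^ ((3:ℝ) / 2) / Real.sqrt (Real.pi * (c - a) * (c - b)))) := by
  have hac : a < c := hab.trans hbc
  have hlim := statement17_general (hμ ▸ hasLaw_vecCons_withDensity) ![a, b, c] 2 (ha.trans hac)
    (by simp [Fin.forall_fin_succ, hac, hbc])
  rw [← sqrt_mul_prod_univ_erase_two a b (ha.trans hac).le]
  simpa [Fin.sum_univ_three, measureReal_def] using hlim
end
end
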